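/- arXiv:0906.3657 — 2 statements merged into one kernel-verified Lean document; each statement's English description precedes it below -/
import Mathlib

section
/- Let b>0, d∈ℕ, and let c_1∈(0,1/2) and c_2∈(1/2,1). There is a constant q_3(c_1,c_2)<1, depending only on c_1, c_2, b, and d, such that for every finite graph G=(V,E) with maximal degree at most d and Cheeger constant strictly greater than b, and every p > q_3(c_1,c_2): μ_p( there exists a connected component whose number of vertices lies in the interval [c_1|V|, c_2|V|) ) ≤ (4/c_1)·e^{−|V|} + 4·e^{−|V|}. -/
open Filter

noncomputable section

/-- The spanning subgraph of `G` determined by the configuration `x : {0,1}^E`: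
an edge of `G` is retained iff its coordinate equals `true`. -/
def percoGraph {V : Type*} (G : SimpleGraph V) (x : G.edgeSet → Bool) : SimpleGraph V :=
  SimpleGraph.fromEdgeSet {e : Sym2 V | ∃ h : e ∈ G.edgeSet, x ⟨e, h⟩ = true}

/-- The vertex set of the connected component of `v` in the configuration `x`. -/
def percoComp {V : Type*} (G : SimpleGraph V) (x : G.edgeSet → Bool) (v : V) : Set V :=
  {u | (percoGraph G x).Reachable v u}

/-- The number of vertices of the connected component of `v` in the configuration `x`. -/
def compSize {V : Type*} (G : SimpleGraph V) (x : G.edgeSet → Bool) (v : V) : ℕ :=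
  (percoComp G x v).ncard

/-- `L⁽¹⁾`: the number of vertices of the largest connected component of the configuration. -/
def largestComp {V : Type*} (G : SimpleGraph V) (x : G.edgeSet → Bool) : ℕ :=
  sSup (Set.range (compSize G x))

/-- The probability of a single configuration under the product Bernoulli(p) measure. -/
def configProb {E : Type*} (p : ℝ) (x : E → Bool) : ℝ :=
  ∏ᶠ e : E, if x e then p else 1 - p

/-- The product Bernoulli(p) probability of a set of configurations. -/
def probC {E : Type*} (p : ℝ) (A : Set (E → Bool)) : ℝ :=
  ∑ᶠ x ∈ A, configProb p x

/-- Expectation under the product Bernoulli(p) measure. -/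
def expC {E : Type*} (p : ℝ) (f : (E → Bool) → ℝ) : ℝ :=
  ∑ᶠ x : E → Bool, configProb p x * f x

/-- Variance under the product Bernoulli(p) measure. -/
def varC {E : Type*} (p : ℝ) (f : (E → Bool) → ℝ) : ℝ :=
  expC p (fun x => f x ^ 2) - (expC p f) ^ 2

open Classical in
/-- The configuration `x` with coordinate `e` set to `b`. -/
def setEdge {E : Type*} (x : E → Bool) (e : E) (b : Bool) : E → Bool :=
  fun e' => if e' = e then b else x e'

/-- The operator `Δ_{e,p} f (x) = f(x) - ∫ f(x) dx(e)`. -/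
def deltaE {E : Type*} (p : ℝ) (f : (E → Bool) → ℝ) (e : E) (x : E → Bool) : ℝ :=
  f x - (p * f (setEdge x e true) + (1 - p) * f (setEdge x e false))

/-- The norm `‖g‖_{1,p}`. -/
def norm1 {E : Type*} (p : ℝ) (g : (E → Bool) → ℝ) : ℝ :=
  expC p fun x => |g x|

/-- The squared norm `‖g‖_{2,p}²`. -/
def sqNorm2 {E : Type*} (p : ℝ) (g : (E → Bool) → ℝ) : ℝ :=
  expC p fun x => g x ^ 2

/-- `|E(S, Sᶜ)|`: the number of edges of `G` with one endpoint in `S` and the other outside `S`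
(counted via the ordered pair whose first coordinate lies in `S`). -/
def edgeBoundaryCard {V : Type*} (G : SimpleGraph V) (S : Set V) : ℕ :=
  {q : V × V | G.Adj q.1 q.2 ∧ q.1 ∈ S ∧ q.2 ∉ S}.ncard

/-- The maximal degree of `G` is at most `d`. -/
def DegreeLE {V : Type*} (G : SimpleGraph V) (d : ℕ) : Prop :=
  ∀ v, {u | G.Adj v u}.ncard ≤ d

/-- The Cheeger (edge-isoperimetric) constant of `G` is strictly greater than `b`. -/
def CheegerGT {V : Type*} (G : SimpleGraph V) (b : ℝ) : Prop :=
  ∀ S : Set V, 0 < S.ncard → 2 * S.ncard ≤ Nat.card V →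
    b * (S.ncard : ℝ) < (edgeBoundaryCard G S : ℝ)

/-- A `(b,d)`-expander: a sequence of finite graphs with `|V_n| → ∞`, maximal degree at most `d`
and Cheeger constant greater than `b`. -/
structure ExpanderSeq (b : ℝ) (d : ℕ) where
  V : ℕ → Type
  finV : ∀ n, Finite (V n)
  G : ∀ n, SimpleGraph (V n)
  card_tendsto : Tendsto (fun n => Nat.card (V n)) atTop atTop
  degree_le : ∀ n, DegreeLE (G n) d
  cheeger_gt : ∀ n, CheegerGT (G n) b

open Classical in
lemma probC_eq_sum {E : Type*} [Fintype E] (p : ℝ) (A : Set (E → Bool)) :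
    probC p A = ∑ x with x ∈ A, ∏ e, (if x e then p else 1 - p) := by
  unfold probC configProb
  rw [finsum_mem_eq_finite_toFinset_sum _ (Set.toFinite A)]
  apply Finset.sum_congr
  · ext x; simp
  · intro x _
    exact finprod_eq_prod_of_fintype _

open Classical in
lemma closed_sum {E : Type*} [Fintype E] (p : ℝ) (F : Finset E) :
    ∑ x : E → Bool with ∀ e ∈ F, x e = false, ∏ e, (if x e then p else 1 - p)
      = (1 - p) ^ F.card := by
  have h := Finset.prod_univ_sum (fun e : E => if e ∈ F then {false} else (Finset.univ : Finset Bool))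
    (fun (_ : E) (c : Bool) => if c then p else 1 - p)
  have h1 : (Finset.univ.filter fun x : E → Bool => ∀ e ∈ F, x e = false) =
      Fintype.piFinset (fun e : E => if e ∈ F then {false} else (Finset.univ : Finset Bool)) := by
    ext x
    simp only [Finset.mem_filter, Finset.mem_univ, true_and, Fintype.mem_piFinset]
    refine forall_congr' fun e => ?_
    by_cases he : e ∈ F <;> simp [he]
  rw [h1, ← h]
  have h2 : ∀ e : E, (∑ c ∈ (if e ∈ F then {false} else (Finset.univ : Finset Bool)),
      if c then p else 1 - p) = if e ∈ F then 1 - p else 1 := by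
    intro e
    by_cases he : e ∈ F <;> simp [he]
  rw [Finset.prod_congr rfl fun e _ => h2 e]
  simp

open Classical in
lemma sum_biUnion_le_aux {ι α : Type*} (T : Finset ι) (t : ι → Finset α) (f : α → ℝ)
    (hf : ∀ x, 0 ≤ f x) : ∑ x ∈ T.biUnion t, f x ≤ ∑ i ∈ T, ∑ x ∈ t i, f x := by
  induction T using Finset.induction_on with
  | empty => simp
  | insert i T hi ih =>
    rw [Finset.biUnion_insert, Finset.sum_insert hi]
    have h := Finset.sum_union_inter (s₁ := t i) (s₂ := T.biUnion t) (f := f)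
    have h2 : 0 ≤ ∑ x ∈ t i ∩ T.biUnion t, f x := Finset.sum_nonneg fun x _ => hf x
    linarith

lemma boundary_compl {V : Type*} (G : SimpleGraph V) (S : Set V) :
    edgeBoundaryCard G Sᶜ = edgeBoundaryCard G S := by
  unfold edgeBoundaryCard
  rw [← Set.ncard_image_of_injective _ (Prod.swap_injective (α := V) (β := V))]
  congr 1
  ext ⟨u, v⟩
  simp only [Set.mem_image, Set.mem_ofPred_eq, Prod.exists, Prod.swap_prod_mk, Prod.mk.injEq,
    Set.mem_compl_iff, not_not]
  constructor
  · rintro ⟨a, c, ⟨h1, h2, h3⟩, rfl, rfl⟩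
    exact ⟨h1.symm, h3, h2⟩
  · rintro ⟨h1, h2, h3⟩
    exact ⟨v, u, ⟨h1.symm, h3, h2⟩, rfl, rfl⟩

/-- The set of boundary edges. -/
def bdryEdges {V : Type*} (G : SimpleGraph V) (S : Set V) : Set G.edgeSet :=
  {e | ∃ u v, u ∈ S ∧ v ∉ S ∧ e.1 = s(u, v)}

lemma boundary_le {V : Type*} [Finite V] (G : SimpleGraph V) (S : Set V) :
    edgeBoundaryCard G S ≤ (bdryEdges G S).ncard := by
  unfold edgeBoundaryCard
  have : (bdryEdges G S).ncard = (Subtype.val '' bdryEdges G S).ncard :=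
    (Set.ncard_image_of_injective _ Subtype.val_injective).symm
  rw [this]
  apply Set.ncard_le_ncard_of_injOn (fun q : V × V => s(q.1, q.2))
  · rintro ⟨u, v⟩ ⟨h1, h2, h3⟩
    exact ⟨⟨s(u, v), h1⟩, ⟨u, v, h2, h3, rfl⟩, rfl⟩
  · rintro ⟨u, v⟩ ⟨h1, h2, h3⟩ ⟨u', v'⟩ ⟨h1', h2', h3'⟩ h
    simp only [Sym2.eq_iff] at h
    rcases h with ⟨rfl, rfl⟩ | ⟨rfl, rfl⟩
    · rfl
    · exact absurd h2 h3'

lemma comp_closed {V : Type*} (G : SimpleGraph V) (x : G.edgeSet → Bool) (v : V)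
    (e : G.edgeSet) (he : e ∈ bdryEdges G (percoComp G x v)) : x e = false := by
  obtain ⟨a, c, ha, hc, hac⟩ := he
  by_contra hx
  have hx : x e = true := by simpa using hx
  apply hc
  have hadj : (percoGraph G x).Adj a c := by
    unfold percoGraph
    rw [SimpleGraph.fromEdgeSet_adj]
    obtain ⟨e, hE⟩ := e
    simp only at hac
    subst hac
    exact ⟨⟨hE, hx⟩, SimpleGraph.Adj.ne hE⟩
  exact SimpleGraph.Reachable.trans ha hadj.reachable

/-- no middle-sized component. For `c₁ ∈ (0,1/2)`, `c₂ ∈ (1/2,1)` there is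
`q₃(c₁,c₂) < 1`, depending only on `c₁, c₂, b, d`, such that for every finite graph with
maximal degree at most `d` and Cheeger constant greater than `b`, and every `p > q₃`, the
probability of having a connected component of size in `[c₁|V|, c₂|V|)` is at most
`(4/c₁) e^{-|V|} + 4 e^{-|V|}`. -/
theorem stmt6 (b : ℝ) (hb : 0 < b) (d : ℕ)
    (c1 : ℝ) (hc1 : c1 ∈ Set.Ioo (0 : ℝ) (1 / 2))
    (c2 : ℝ) (hc2 : c2 ∈ Set.Ioo (1 / 2 : ℝ) 1) :
    ∃ q3 < (1 : ℝ),
      ∀ (V : Type) (_ : Finite V) (G : SimpleGraph V), DegreeLE G d → CheegerGT G b →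
        ∀ p : ℝ, q3 < p → p ≤ 1 →
          probC p {x : G.edgeSet → Bool | ∃ v : V,
              c1 * (Nat.card V : ℝ) ≤ (compSize G x v : ℝ) ∧
              (compSize G x v : ℝ) < c2 * (Nat.card V : ℝ)} ≤
            (4 / c1) * Real.exp (-(Nat.card V : ℝ)) + 4 * Real.exp (-(Nat.card V : ℝ)) := by
  obtain ⟨hc1a, hc1b⟩ := hc1
  obtain ⟨hc2a, hc2b⟩ := hc2
  set m : ℝ := min c1 (1 - c2) with hm
  have hm0 : 0 < m := lt_min hc1a (by linarith)
  have hbm : 0 < b * m := mul_pos hb hm0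
  refine ⟨max 0 (1 - Real.exp (-(2 / (b * m)))), ?_, ?_⟩
  · rw [max_lt_iff]
    exact ⟨one_pos, by linarith [Real.exp_pos (-(2 / (b * m)))]⟩
  intro V hV G _ hG p hp hp1
  rw [max_lt_iff] at hp
  obtain ⟨hp0, hp2⟩ := hp
  classical
  have := Fintype.ofFinite V
  set n := Nat.card V with hn
  have hnn : (0 : ℝ) ≤ n := Nat.cast_nonneg n
  have hw : ∀ x : G.edgeSet → Bool, 0 ≤ ∏ e, (if x e then p else 1 - p) := by
    intro x
    refine Finset.prod_nonneg fun e _ => ?_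
    split_ifs <;> linarith
  -- the isoperimetric bound for middle-sized sets
  have hiso : ∀ S : Set V, 0 < S.ncard → c1 * n ≤ S.ncard → (S.ncard : ℝ) < c2 * n →
      b * m * n ≤ (bdryEdges G S).ncard := by
    intro S h0 h1 h2
    have hle : (edgeBoundaryCard G S : ℝ) ≤ (bdryEdges G S).ncard := by
      exact_mod_cast boundary_le G S
    refine le_trans ?_ hle
    by_cases h : 2 * S.ncard ≤ n
    · have := hG S h0 h
      have h3 : m * n ≤ S.ncard :=
        le_trans (mul_le_mul_of_nonneg_right (min_le_left _ _) hnn) h1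
      have := mul_le_mul_of_nonneg_left h3 hb.le
      linarith
    · have hc : S.ncard + Sᶜ.ncard = n := Set.ncard_add_ncard_compl S
      have hcR : (S.ncard : ℝ) + Sᶜ.ncard = n := by exact_mod_cast hc
      have h3 : m * n ≤ (1 - c2) * n := mul_le_mul_of_nonneg_right (min_le_right _ _) hnn
      have h4 : m * n < Sᶜ.ncard := by linarith
      have h5 : 0 < Sᶜ.ncard := by
        have : (0 : ℝ) < Sᶜ.ncard := lt_of_le_of_lt (by positivity) h4
        exact_mod_cast this
      have := hG Sᶜ h5 (by omega)
      rw [boundary_compl] at this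
      have := mul_le_mul_of_nonneg_left h4.le hb.le
      linarith
  -- the bound for each set
  have hone : ∀ S : Set V, b * m * n ≤ (bdryEdges G S).ncard →
      ∑ x : G.edgeSet → Bool with ∀ e ∈ (bdryEdges G S).toFinset, x e = false,
        ∏ e, (if x e then p else 1 - p) ≤ Real.exp (-(2 * n)) := by
    intro S hS
    have hcs := closed_sum p (bdryEdges G S).toFinset
    have hcs' : ∑ x : G.edgeSet → Bool with ∀ e ∈ (bdryEdges G S).toFinset, x e = false,
        ∏ e, (if x e then p else 1 - p) = (1 - p) ^ (bdryEdges G S).toFinset.card := by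
      convert hcs
    rw [hcs', ← Set.ncard_eq_toFinset_card']
    calc (1 - p) ^ (bdryEdges G S).ncard
        ≤ Real.exp (-(2 / (b * m))) ^ (bdryEdges G S).ncard :=
          pow_le_pow_left₀ (by linarith) (by linarith) _
      _ = Real.exp ((bdryEdges G S).ncard * (-(2 / (b * m)))) := (Real.exp_nat_mul _ _).symm
      _ ≤ Real.exp (-(2 * n)) := by
          apply Real.exp_le_exp.mpr
          have h := mul_le_mul_of_nonneg_right hS (by positivity : 0 ≤ 2 / (b * m))
          have h2 : b * m * n * (2 / (b * m)) = 2 * n := by field_simp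
          linarith
  set T : Finset (Set V) :=
    Finset.univ.filter fun S : Set V => b * m * n ≤ (bdryEdges G S).ncard with hT
  have hmain : probC p {x : G.edgeSet → Bool | ∃ v : V,
              c1 * (n : ℝ) ≤ (compSize G x v : ℝ) ∧
              (compSize G x v : ℝ) < c2 * (n : ℝ)} ≤ Real.exp (-(n : ℝ)) := by
    rw [probC_eq_sum]
    calc _ ≤ ∑ x ∈ T.biUnion (fun S => Finset.univ.filter fun x : G.edgeSet → Bool =>
              ∀ e ∈ (bdryEdges G S).toFinset, x e = false),
              ∏ e, (if x e then p else 1 - p) := by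
          apply Finset.sum_le_sum_of_subset_of_nonneg
          · intro x hx
            simp only [Finset.mem_filter, Finset.mem_univ, true_and, Set.mem_ofPred_eq] at hx
            obtain ⟨v, h1, h2⟩ := hx
            have h0 : 0 < (percoComp G x v).ncard :=
              (Set.ncard_pos).mpr ⟨v, SimpleGraph.Reachable.refl v⟩
            simp only [Finset.mem_biUnion, hT, Finset.mem_filter, Finset.mem_univ, true_and]
            refine ⟨percoComp G x v, hiso _ h0 h1 h2, fun e he => ?_⟩
            exact comp_closed G x v e (by simpa using he)
          · intro x _ _
            exact hw x
      _ ≤ ∑ S ∈ T, ∑ x : G.edgeSet → Bool with ∀ e ∈ (bdryEdges G S).toFinset, x e = false,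
              ∏ e, (if x e then p else 1 - p) :=
          by convert sum_biUnion_le_aux T _ _ hw
      _ ≤ ∑ S ∈ T, Real.exp (-(2 * n)) := by
          apply Finset.sum_le_sum
          intro S hS
          exact hone S (by simpa [hT] using hS)
      _ = T.card * Real.exp (-(2 * n)) := by rw [Finset.sum_const, nsmul_eq_mul]
      _ ≤ Real.exp n * Real.exp (-(2 * n)) := by
          apply mul_le_mul_of_nonneg_right _ (Real.exp_pos _).le
          have h1 : T.card ≤ 2 ^ n := by
            refine (Finset.card_le_univ T).trans ?_
            rw [Fintype.card_set, hn, Nat.card_eq_fintype_card]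
          calc (T.card : ℝ) ≤ 2 ^ n := by exact_mod_cast h1
            _ ≤ Real.exp 1 ^ n :=
              pow_le_pow_left₀ (by norm_num) (by linarith [Real.add_one_le_exp (1 : ℝ)]) _
            _ = Real.exp n := by rw [← Real.exp_nat_mul, mul_one]
      _ = Real.exp (-(n : ℝ)) := by
          rw [← Real.exp_add]; congr 1; ring
  have hpos := Real.exp_pos (-(n : ℝ))
  have : 0 ≤ 4 / c1 * Real.exp (-(n : ℝ)) := by positivity
  linarith
end
end

section
/- Let b>0, d∈ℕ and let (G_n)_{n≥0} be a (b,d)-expander. There exist constants δ(b,d)<1 and K(b,d)<∞, depending only on b and d, such that for every n: sup over p∈[0,1] and over edges e∈E_n of ‖Δ_{e,p} L_n^{(1)}‖_{1,p} ≤ K(b,d)·|V_n|^{δ(b,d)}. -/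
open Filter

noncomputable section

section ProbPart

open Classical

variable {E : Type*}

lemma setEdge_same (x : E → Bool) (e : E) (b : Bool) : setEdge x e b e = b := by
  simp [setEdge]

lemma setEdge_ne (x : E → Bool) {e f : E} (h : f ≠ e) (b : Bool) : setEdge x e b f = x f := by
  simp [setEdge, h]

lemma setEdge_setEdge (x : E → Bool) (e : E) (b c : Bool) :
    setEdge (setEdge x e b) e c = setEdge x e c := by
  funext f
  simp only [setEdge]
  split_ifs <;> rfl

lemma setEdge_self (x : E → Bool) (e : E) : setEdge x e (x e) = x := by
  funext f
  simp only [setEdge]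
  split_ifs with h
  · rw [h]
  · rfl

lemma setEdge_self' (x : E → Bool) (e : E) {b : Bool} (h : x e = b) : setEdge x e b = x := by
  rw [← h, setEdge_self]

/-- Indicator of an open edge. -/
def ind (x : E → Bool) (e : E) : ℝ := if x e then 1 else 0

variable [Fintype E]

lemma expC_eq (p : ℝ) (f : (E → Bool) → ℝ) : expC p f = ∑ x, configProb p x * f x := by
  unfold expC
  exact finsum_eq_sum_of_fintype _

lemma configProb_nonneg {p : ℝ} (hp : p ∈ Set.Icc (0 : ℝ) 1) (x : E → Bool) :
    0 ≤ configProb p x := by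
  unfold configProb
  rw [finprod_eq_prod_of_fintype]
  refine Finset.prod_nonneg fun e _ => ?_
  split_ifs
  · exact hp.1
  · linarith [hp.2]

lemma expC_mono {p : ℝ} (hp : p ∈ Set.Icc (0 : ℝ) 1) {f g : (E → Bool) → ℝ}
    (h : ∀ x, f x ≤ g x) : expC p f ≤ expC p g := by
  rw [expC_eq, expC_eq]
  exact Finset.sum_le_sum fun x _ => mul_le_mul_of_nonneg_left (h x) (configProb_nonneg hp x)

lemma expC_add (p : ℝ) (f g : (E → Bool) → ℝ) :
    expC p (fun x => f x + g x) = expC p f + expC p g := by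
  simp only [expC_eq, mul_add, Finset.sum_add_distrib]

lemma expC_sub (p : ℝ) (f g : (E → Bool) → ℝ) :
    expC p (fun x => f x - g x) = expC p f - expC p g := by
  simp only [expC_eq, mul_sub, Finset.sum_sub_distrib]

lemma expC_smul (p c : ℝ) (f : (E → Bool) → ℝ) :
    expC p (fun x => c * f x) = c * expC p f := by
  simp only [expC_eq, Finset.mul_sum]
  exact Finset.sum_congr rfl fun x _ => by ring

lemma expC_sum {ι : Type*} (p : ℝ) (s : Finset ι) (f : ι → (E → Bool) → ℝ) :
    expC p (fun x => ∑ i ∈ s, f i x) = ∑ i ∈ s, expC p (f i) := by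
  simp only [expC_eq, Finset.mul_sum]
  exact Finset.sum_comm

lemma expC_one (p : ℝ) : expC (E := E) p (fun _ => 1) = 1 := by
  rw [expC_eq]
  have h := Finset.prod_univ_sum (fun _ : E => (Finset.univ : Finset Bool))
    (fun _ b => if b then p else 1 - p)
  simp only [Fintype.piFinset_univ, Fintype.sum_bool] at h
  simp only [mul_one, configProb, finprod_eq_prod_of_fintype]
  rw [← h]
  simp

lemma expC_const (p c : ℝ) : expC (E := E) p (fun _ => c) = c := by
  have := expC_smul (E := E) p c (fun _ => 1)
  simpa [expC_one] using this

lemma expC_nonneg {p : ℝ} (hp : p ∈ Set.Icc (0 : ℝ) 1) {f : (E → Bool) → ℝ}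
    (h : ∀ x, 0 ≤ f x) : 0 ≤ expC p f := by
  rw [expC_eq]
  exact Finset.sum_nonneg fun x _ => mul_nonneg (configProb_nonneg hp x) (h x)

lemma sum_flip (F : (E → Bool) → ℝ) (e : E) :
    ∑ x, (F (setEdge x e true) + F (setEdge x e false)) = 2 * ∑ x, F x := by
  have hinv : Function.Involutive (fun x : E → Bool => setEdge x e (!(x e))) := by
    intro x
    simp only [setEdge_same, setEdge_setEdge, Bool.not_not, setEdge_self]
  have h := Equiv.sum_comp (Function.Involutive.toPerm _ hinv) F
  have h2 : ∀ x : E → Bool, F (setEdge x e true) + F (setEdge x e false)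
      = F x + F ((Function.Involutive.toPerm _ hinv) x) := by
    intro x
    change _ = F x + F (setEdge x e (!(x e)))
    cases hx : x e
    · rw [setEdge_self' x e hx, Bool.not_false, add_comm]
    · rw [setEdge_self' x e hx, Bool.not_true]
  rw [Finset.sum_congr rfl fun x _ => h2 x, Finset.sum_add_distrib, h]
  ring

lemma configProb_setEdge (p : ℝ) (x : E → Bool) (e : E) (b : Bool) :
    configProb p (setEdge x e b) = (if b then p else 1 - p) *
      ∏ f ∈ Finset.univ.erase e, if x f then p else 1 - p := by
  unfold configProb
  rw [finprod_eq_prod_of_fintype, ← Finset.mul_prod_erase _ _ (Finset.mem_univ e), setEdge_same]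
  congr 1
  refine Finset.prod_congr rfl fun f hf => ?_
  rw [setEdge_ne _ (Finset.ne_of_mem_erase hf)]

lemma expC_split (p : ℝ) (f : (E → Bool) → ℝ) (e : E) :
    expC p f = expC p (fun x => p * f (setEdge x e true) + (1 - p) * f (setEdge x e false)) := by
  rw [expC_eq, expC_eq]
  have h1 := sum_flip (fun x => configProb p x * f x) e
  have h2 := sum_flip (fun x => configProb p x *
    (p * f (setEdge x e true) + (1 - p) * f (setEdge x e false))) e
  have h3 : ∀ x : E → Bool, configProb p (setEdge x e true) * f (setEdge x e true) +
      configProb p (setEdge x e false) * f (setEdge x e false) =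
      configProb p (setEdge x e true) *
    (p * f (setEdge (setEdge x e true) e true) + (1 - p) * f (setEdge (setEdge x e true) e false))
      + configProb p (setEdge x e false) *
    (p * f (setEdge (setEdge x e false) e true)
      + (1 - p) * f (setEdge (setEdge x e false) e false)) := by
    intro x
    simp only [configProb_setEdge, setEdge_setEdge, if_true]
    simp
    ring
  rw [Finset.sum_congr rfl fun x _ => h3 x] at h1
  linarith

lemma expC_open {p : ℝ} (hp : p ∈ Set.Icc (0 : ℝ) 1) {f : (E → Bool) → ℝ} (hf : ∀ x, 0 ≤ f x)
    (e : E) : p * expC p (fun x => f (setEdge x e true)) ≤ expC p f := by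
  rw [expC_split p f e, ← expC_smul]
  refine expC_mono hp fun x => ?_
  have := mul_nonneg (sub_nonneg.2 hp.2) (hf (setEdge x e false))
  linarith

lemma expC_close {p : ℝ} (hp : p ∈ Set.Icc (0 : ℝ) 1) {f : (E → Bool) → ℝ} (hf : ∀ x, 0 ≤ f x)
    (e : E) : (1 - p) * expC p (fun x => f (setEdge x e false)) ≤ expC p f := by
  rw [expC_split p f e, ← expC_smul]
  refine expC_mono hp fun x => ?_
  have := mul_nonneg hp.1 (hf (setEdge x e true))
  linarith

lemma expC_ind_mul (p : ℝ) (f : (E → Bool) → ℝ) (e : E)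
    (hf : ∀ x b, f (setEdge x e b) = f x) :
    expC p (fun x => ind x e * f x) = p * expC p f := by
  rw [expC_split p _ e, ← expC_smul]
  congr 1
  funext x
  simp [ind, setEdge_same, hf]

lemma expC_cov_ne (p : ℝ) {e f : E} (h : e ≠ f) :
    expC p (fun x => (ind x e - p) * (ind x f - p)) = 0 := by
  rw [expC_split p _ e]
  have : (fun x : E → Bool => p * ((ind (setEdge x e true) e - p) * (ind (setEdge x e true) f - p))
      + (1 - p) * ((ind (setEdge x e false) e - p) * (ind (setEdge x e false) f - p)))
      = fun _ => 0 := by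
    funext x
    simp only [ind, setEdge_same, setEdge_ne _ h.symm]
    simp
    ring
  rw [this, expC_const]

lemma expC_cov_self {p : ℝ} (hp : p ∈ Set.Icc (0 : ℝ) 1) (e : E) :
    expC p (fun x => (ind x e - p) * (ind x e - p)) ≤ 1 := by
  calc _ ≤ expC (E := E) p (fun _ => 1) := by
        refine expC_mono hp fun x => ?_
        have h0 := hp.1
        have h1 := hp.2
        unfold ind
        split_ifs <;> nlinarith
    _ = 1 := expC_one p

/-- Sum of influences over a family of edges. -/
lemma sum_influence {p : ℝ} (hp : p ∈ Set.Icc (0 : ℝ) 1)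
    (h : (E → Bool) → ℝ) (h0 : ∀ x, 0 ≤ h x) (h1 : ∀ x, h x ≤ 1)
    (t : ℝ) (ht : 0 < t) :
    p * ∑ e : E, expC p (fun x => h x - h (setEdge x e true)) ≤
      t + Fintype.card E / t := by
  have key : ∀ e : E, p * expC p (fun x => h x - h (setEdge x e true))
      = expC p (fun x => (-1) * (h x * (ind x e - p))) := by
    intro e
    rw [expC_split p _ e, expC_split p (fun x => (-1) * (h x * (ind x e - p))) e, ← expC_smul]
    congr 1
    funext x
    simp only [setEdge_setEdge, ind, setEdge_same]
    simp
    ring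
  rw [Finset.mul_sum, Finset.sum_congr rfl fun e _ => key e, ← expC_sum]
  have hY : expC (E := E) p (fun x => (∑ e, (ind x e - p)) ^ 2) ≤ Fintype.card E := by
    have : (fun x : E → Bool => (∑ e, (ind x e - p)) ^ 2)
        = fun x => ∑ e, ∑ f, (ind x e - p) * (ind x f - p) := by
      funext x
      rw [sq, Finset.sum_mul_sum]
    rw [this, expC_sum]
    calc _ ≤ ∑ e : E, (1 : ℝ) := by
          refine Finset.sum_le_sum fun e _ => ?_
          rw [expC_sum, Finset.sum_eq_single e]
          · exact expC_cov_self hp e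
          · intro f _ hf
            exact expC_cov_ne p hf.symm
          · simp
      _ = _ := by simp
  calc _ ≤ expC (E := E) p (fun x => t + (1 / t) * (∑ e, (ind x e - p)) ^ 2) := by
        refine expC_mono hp fun x => ?_
        rw [← Finset.mul_sum, ← Finset.mul_sum]
        set Y := ∑ e, (ind x e - p)
        have h2 : -1 * (h x * Y) ≤ |Y| := by
          have : |h x * Y| ≤ |Y| := by
            rw [abs_mul, abs_of_nonneg (h0 x)]
            exact mul_le_of_le_one_left (abs_nonneg _) (h1 x)
          linarith [neg_abs_le (h x * Y)]
        have h3 : |Y| ≤ t + 1 / t * Y ^ 2 := by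
          have h5 : t + 1 / t * Y ^ 2 = (t ^ 2 + |Y| ^ 2) / t := by
            rw [sq_abs]; field_simp
          rw [h5, le_div_iff₀ ht]
          nlinarith [sq_nonneg (t - |Y|), sq_nonneg t, sq_nonneg (|Y|)]
        linarith
    _ = t + (1 / t) * expC (E := E) p (fun x => (∑ e, (ind x e - p)) ^ 2) := by
        rw [expC_add, expC_const, expC_smul]
    _ ≤ _ := by
        have h6 : (Fintype.card E : ℝ) / t = 1 / t * Fintype.card E := by ring
        rw [h6]
        gcongr

lemma norm1_deltaE_eq {p : ℝ} (hp : p ∈ Set.Icc (0 : ℝ) 1) (f : (E → Bool) → ℝ) (e : E) :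
    norm1 p (deltaE p f e) =
      2 * (p * ((1 - p) * expC p (fun x => |f (setEdge x e true) - f (setEdge x e false)|))) := by
  unfold norm1
  rw [expC_split p _ e, ← expC_smul, ← expC_smul, ← expC_smul]
  congr 1
  funext x
  simp only [deltaE, setEdge_setEdge]
  set a := f (setEdge x e true)
  set b := f (setEdge x e false)
  have h1 : a - (p * a + (1 - p) * b) = (1 - p) * (a - b) := by ring
  have h2 : b - (p * a + (1 - p) * b) = p * (b - a) := by ring
  rw [h1, h2, abs_mul, abs_mul, abs_of_nonneg hp.1, abs_of_nonneg (sub_nonneg.2 hp.2),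
    abs_sub_comm b a]
  ring

end ProbPart

section GraphPart

open Classical

variable {V : Type*} {G : SimpleGraph V}

lemma percoGraph_adj {x : G.edgeSet → Bool} {a c : V} :
    (percoGraph G x).Adj a c ↔ ∃ h : G.Adj a c, x ⟨s(a, c), h⟩ = true := by
  unfold percoGraph
  rw [SimpleGraph.fromEdgeSet_adj]
  constructor
  · rintro ⟨⟨h, hx⟩, _⟩
    exact ⟨h, hx⟩
  · rintro ⟨h, hx⟩
    exact ⟨⟨h, hx⟩, h.ne⟩

lemma percoGraph_mono {x y : G.edgeSet → Bool} (h : ∀ e, x e = true → y e = true) :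
    percoGraph G x ≤ percoGraph G y := by
  intro a c hac
  rw [percoGraph_adj] at hac ⊢
  obtain ⟨h1, h2⟩ := hac
  exact ⟨h1, h _ h2⟩

lemma percoGraph_le_open (x : G.edgeSet → Bool) (e : G.edgeSet) :
    percoGraph G x ≤ percoGraph G (setEdge x e true) := by
  refine percoGraph_mono fun f hf => ?_
  unfold setEdge
  split_ifs <;> simp [hf]

lemma percoGraph_close_le_open (x : G.edgeSet → Bool) (e : G.edgeSet) :
    percoGraph G (setEdge x e false) ≤ percoGraph G (setEdge x e true) := by
  have := percoGraph_le_open (setEdge x e false) e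
  rwa [setEdge_setEdge] at this

lemma percoGraph_close_le (x : G.edgeSet → Bool) (e : G.edgeSet) :
    percoGraph G (setEdge x e false) ≤ percoGraph G x := by
  refine percoGraph_mono fun f hf => ?_
  unfold setEdge at hf
  split_ifs at hf
  exact hf

lemma reach_open {x : G.edgeSet → Bool} {a c : V} (hac : G.Adj a c) {z w : V}
    (h : (percoGraph G (setEdge x ⟨s(a, c), hac⟩ true)).Reachable z w) :
    (percoGraph G x).Reachable z w ∨
    ((percoGraph G x).Reachable z a ∧ (percoGraph G x).Reachable c w) ∨
    ((percoGraph G x).Reachable z c ∧ (percoGraph G x).Reachable a w) := by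
  rw [SimpleGraph.reachable_iff_reflTransGen] at h
  induction h with
  | refl => exact Or.inl (SimpleGraph.Reachable.refl _)
  | @tail w w' _ hstep ih =>
    rw [percoGraph_adj] at hstep
    obtain ⟨h1, h2⟩ := hstep
    by_cases heq : (⟨s(w, w'), h1⟩ : G.edgeSet) = ⟨s(a, c), hac⟩
    · have h3 : s(w, w') = s(a, c) := congrArg Subtype.val heq
      rw [Sym2.eq_iff] at h3
      rcases h3 with ⟨rfl, rfl⟩ | ⟨rfl, rfl⟩
      · rcases ih with ih | ih | ih
        · exact Or.inr (Or.inl ⟨ih, SimpleGraph.Reachable.refl _⟩)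
        · exact Or.inr (Or.inl ⟨ih.1, SimpleGraph.Reachable.refl _⟩)
        · exact Or.inl ih.1
      · rcases ih with ih | ih | ih
        · exact Or.inr (Or.inr ⟨ih, SimpleGraph.Reachable.refl _⟩)
        · exact Or.inl ih.1
        · exact Or.inr (Or.inr ⟨ih.1, SimpleGraph.Reachable.refl _⟩)
    · rw [setEdge_ne _ heq] at h2
      have h4 : (percoGraph G x).Reachable w w' :=
        SimpleGraph.Adj.reachable (percoGraph_adj.2 ⟨h1, h2⟩)
      rcases ih with ih | ih | ih
      · exact Or.inl (ih.trans h4)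
      · exact Or.inr (Or.inl ⟨ih.1, ih.2.trans h4⟩)
      · exact Or.inr (Or.inr ⟨ih.1, ih.2.trans h4⟩)

variable [Finite V]

lemma compSize_le_card (x : G.edgeSet → Bool) (v : V) : compSize G x v ≤ Nat.card V := by
  unfold compSize
  exact Set.ncard_le_card _

lemma bddAbove_compSize (x : G.edgeSet → Bool) : BddAbove (Set.range (compSize G x)) :=
  ⟨Nat.card V, by rintro _ ⟨v, rfl⟩; exact compSize_le_card x v⟩

lemma compSize_le_largest (x : G.edgeSet → Bool) (v : V) : compSize G x v ≤ largestComp G x :=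
  le_csSup (bddAbove_compSize x) ⟨v, rfl⟩

lemma largest_le {x : G.edgeSet → Bool} {m : ℕ} (h : ∀ v, compSize G x v ≤ m) :
    largestComp G x ≤ m := by
  unfold largestComp
  apply csSup_le'
  rintro _ ⟨v, rfl⟩
  exact h v

lemma compSize_mono {x y : G.edgeSet → Bool} (h : percoGraph G x ≤ percoGraph G y) (v : V) :
    compSize G x v ≤ compSize G y v :=
  Set.ncard_le_ncard (fun _ hw => SimpleGraph.Reachable.mono h hw) (Set.toFinite _)

lemma largest_mono {x y : G.edgeSet → Bool} (h : percoGraph G x ≤ percoGraph G y) :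
    largestComp G x ≤ largestComp G y :=
  largest_le fun v => (compSize_mono h v).trans (compSize_le_largest y v)

lemma largest_open_le (x : G.edgeSet → Bool) {u v : V} (huv : G.Adj u v) :
    largestComp G (setEdge x ⟨s(u, v), huv⟩ true) ≤ largestComp G x +
      (if (percoGraph G x).Reachable u v then 0 else min (compSize G x u) (compSize G x v)) := by
  refine largest_le fun z => ?_
  by_cases hr : (percoGraph G x).Reachable u v
  · rw [if_pos hr, add_zero]
    refine le_trans ?_ (compSize_le_largest x z)
    refine Set.ncard_le_ncard (fun w hw => ?_) (Set.toFinite _)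
    rcases reach_open huv hw with h | h | h
    · exact h
    · exact (h.1.trans hr).trans h.2
    · exact (h.1.trans hr.symm).trans h.2
  · rw [if_neg hr]
    have hsum : compSize G x u + compSize G x v ≤
        largestComp G x + min (compSize G x u) (compSize G x v) := by
      have h1 := compSize_le_largest x u
      have h2 := compSize_le_largest x v
      rcases le_total (compSize G x u) (compSize G x v) with h | h
      · rw [min_eq_left h]; omega
      · rw [min_eq_right h]; omega
    by_cases hz : (percoGraph G x).Reachable z u ∨ (percoGraph G x).Reachable z v
    · refine le_trans ?_ hsum
      refine le_trans ?_ (Set.ncard_union_le (percoComp G x u) (percoComp G x v))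
      refine Set.ncard_le_ncard (fun w hw => ?_) (Set.toFinite _)
      rcases reach_open huv hw with h | h | h
      · rcases hz with hz | hz
        · exact Or.inl (hz.symm.trans h)
        · exact Or.inr (hz.symm.trans h)
      · exact Or.inr h.2
      · exact Or.inl h.2
    · push Not at hz
      refine le_trans ?_ (le_trans (compSize_le_largest x z) (Nat.le_add_right _ _))
      refine Set.ncard_le_ncard (fun w hw => ?_) (Set.toFinite _)
      rcases reach_open huv hw with h | h | h
      · exact h
      · exact absurd h.1 hz.1
      · exact absurd h.1 hz.2

lemma diff_bound (x : G.edgeSet → Bool) {u v : V} (huv : G.Adj u v) :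
    |(largestComp G (setEdge x ⟨s(u, v), huv⟩ true) : ℝ) -
      largestComp G (setEdge x ⟨s(u, v), huv⟩ false)| ≤
      (if (percoGraph G (setEdge x ⟨s(u, v), huv⟩ false)).Reachable u v then (0 : ℝ) else
        min (compSize G (setEdge x ⟨s(u, v), huv⟩ false) u : ℝ)
          (compSize G (setEdge x ⟨s(u, v), huv⟩ false) v)) := by
  have h1 := largest_open_le (setEdge x ⟨s(u, v), huv⟩ false) huv
  rw [setEdge_setEdge] at h1
  have h2 := largest_mono (percoGraph_close_le_open x ⟨s(u, v), huv⟩)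
  have h2' : (largestComp G (setEdge x ⟨s(u, v), huv⟩ false) : ℝ) ≤
    largestComp G (setEdge x ⟨s(u, v), huv⟩ true) := by exact_mod_cast h2
  rw [abs_of_nonneg (sub_nonneg.2 h2')]
  have h3 : (largestComp G (setEdge x ⟨s(u, v), huv⟩ true) : ℝ) ≤ _ := Nat.cast_le.2 h1
  push_cast at h3
  linarith

end GraphPart

section Subcritical

open Classical

variable {V : Type*} {G : SimpleGraph V}

/-- Connection by open edges avoiding `F` (after the starting point). -/
def reachAvoid (F : Finset V) (x : G.edgeSet → Bool) (u w : V) : Prop :=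
  Relation.ReflTransGen (fun a c => (percoGraph G x).Adj a c ∧ c ∉ F) u w

lemma reachAvoid_step {F : Finset V} {x : G.edgeSet → Bool} {u w : V}
    (h : reachAvoid F x u w) :
    w = u ∨ ∃ v, (percoGraph G x).Adj u v ∧ v ∉ insert u F ∧ reachAvoid (insert u F) x v w := by
  induction h with
  | refl => exact Or.inl rfl
  | @tail w w' _ hs ih =>
    by_cases hw : w' = u
    · exact Or.inl hw
    · right
      have hw' : w' ∉ insert u F := by simp [hw, hs.2]
      rcases ih with rfl | ⟨v, h1, h2, h3⟩
      · exact ⟨w', hs.1, hw', Relation.ReflTransGen.refl⟩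
      · exact ⟨v, h1, h2, h3.tail ⟨hs.1, hw'⟩⟩

lemma reachAvoid_setEdge_aux {F : Finset V} {x : G.edgeSet → Bool} {u v w : V} (hu : u ∈ F)
    (hv : v ∉ F) {a : V} (hua : G.Adj u a) (b : Bool) (h : reachAvoid F x v w) :
    w ∉ F ∧ reachAvoid F (setEdge x ⟨s(u, a), hua⟩ b) v w := by
  induction h with
  | refl => exact ⟨hv, Relation.ReflTransGen.refl⟩
  | @tail w w' _ hs ih =>
    refine ⟨hs.2, ih.2.tail ⟨?_, hs.2⟩⟩
    obtain ⟨h1, h2⟩ := percoGraph_adj.1 hs.1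
    refine percoGraph_adj.2 ⟨h1, ?_⟩
    rw [setEdge_ne, h2]
    intro heq
    have h3 : s(w, w') = s(u, a) := congrArg Subtype.val heq
    rw [Sym2.eq_iff] at h3
    rcases h3 with ⟨rfl, _⟩ | ⟨_, rfl⟩
    · exact ih.1 hu
    · exact hs.2 hu

lemma reachAvoid_setEdge {F : Finset V} {x : G.edgeSet → Bool} {u v w : V} (hu : u ∈ F)
    (hv : v ∉ F) {a : V} (hua : G.Adj u a) (b : Bool) :
    reachAvoid F (setEdge x ⟨s(u, a), hua⟩ b) v w ↔ reachAvoid F x v w := by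
  constructor
  · intro h
    have := (reachAvoid_setEdge_aux hu hv hua (x ⟨s(u, a), hua⟩) h).2
    rwa [setEdge_setEdge, setEdge_self] at this
  · intro h
    exact (reachAvoid_setEdge_aux hu hv hua b h).2

variable [Fintype V]

lemma degree_le_of {d : ℕ} (hd : DegreeLE G d) (v : V) :
    (Finset.univ.filter (fun u => G.Adj v u)).card ≤ d := by
  refine le_trans (le_of_eq ?_) (hd v)
  rw [← Set.ncard_coe_finset]
  congr 1
  ext u
  simp

lemma chi_bound {d : ℕ} (hd : DegreeLE G d) {p : ℝ} (hp : p ∈ Set.Icc (0 : ℝ) 1)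
    (hpd : p * (2 * d) ≤ 1) (m : ℕ) :
    ∀ (F : Finset V), (Fᶜ).card ≤ m → ∀ u ∉ F,
      expC p (fun x : G.edgeSet → Bool => ∑ w, if reachAvoid F x u w then (1 : ℝ) else 0) ≤ 2 := by
  induction m with
  | zero =>
    intro F hF u hu
    have : Fᶜ = ∅ := Finset.card_eq_zero.1 (Nat.le_zero.1 hF)
    have h2 : u ∈ Fᶜ := by simpa using hu
    rw [this] at h2
    simp at h2
  | succ m ih =>
    intro F hF u hu
    have hF' : ((insert u F)ᶜ).card ≤ m := by
      have h1 : (insert u F)ᶜ ⊂ Fᶜ := by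
        rw [Finset.ssubset_iff_of_subset]
        · exact ⟨u, by simpa using hu, by simp⟩
        · intro z; simp
      have := Finset.card_lt_card h1
      omega
    set S := Finset.univ.filter (fun v => G.Adj u v) with hS
    have hpt : ∀ x : G.edgeSet → Bool,
        (∑ w, if reachAvoid F x u w then (1 : ℝ) else 0) ≤
        1 + ∑ v ∈ S, (if (percoGraph G x).Adj u v ∧ v ∉ insert u F then (1 : ℝ) else 0) *
          ∑ w, if reachAvoid (insert u F) x v w then (1 : ℝ) else 0 := by
      intro x
      have h1 : (1 : ℝ) = ∑ w, if w = u then (1 : ℝ) else 0 := by simp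
      rw [h1]
      simp only [Finset.mul_sum]
      rw [Finset.sum_comm, ← Finset.sum_add_distrib]
      refine Finset.sum_le_sum fun w _ => ?_
      have hnn : ∀ v ∈ S, (0 : ℝ) ≤ (if (percoGraph G x).Adj u v ∧ v ∉ insert u F then (∑ w, if w = u then (1 : ℝ) else 0) else 0) *
          if reachAvoid (insert u F) x v w then (∑ w, if w = u then (1 : ℝ) else 0) else 0 := by
        intro v _
        rw [← h1]
        split_ifs <;> simp
      rw [← h1] at hnn ⊢
      have hnn' := Finset.sum_nonneg hnn
      split_ifs with h2 h3 h3
      · linarith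
      · obtain h | ⟨v, h4, h5, h6⟩ := reachAvoid_step h2
        · exact absurd h h3
        · have hv : v ∈ S := by
            rw [hS, Finset.mem_filter]
            exact ⟨Finset.mem_univ _, (percoGraph_adj.1 h4).1⟩
          have := Finset.single_le_sum hnn hv
          rw [if_pos ⟨h4, h5⟩, if_pos h6] at this
          linarith
      · linarith
      · linarith
    refine (expC_mono hp hpt).trans ?_
    rw [expC_add, expC_const, expC_sum]
    have hterm : ∀ v ∈ S, expC p (fun x : G.edgeSet → Bool =>
        (if (percoGraph G x).Adj u v ∧ v ∉ insert u F then (1 : ℝ) else 0) *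
          ∑ w, if reachAvoid (insert u F) x v w then (1 : ℝ) else 0) ≤ p * 2 := by
      intro v hv
      have huv : G.Adj u v := (Finset.mem_filter.1 hv).2
      by_cases hvF : v ∈ insert u F
      · simp only [hvF, not_true_eq_false, and_false, if_false, zero_mul]
        rw [expC_const]
        linarith [hp.1]
      · have h1 : (fun x : G.edgeSet → Bool =>
            (if (percoGraph G x).Adj u v ∧ v ∉ insert u F then (1 : ℝ) else 0) *
            ∑ w, if reachAvoid (insert u F) x v w then (1 : ℝ) else 0) = fun x =>
            ind x ⟨s(u, v), huv⟩ * ∑ w, if reachAvoid (insert u F) x v w then (1 : ℝ) else 0 := by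
          funext x
          congr 1
          unfold ind
          have : ((percoGraph G x).Adj u v ∧ v ∉ insert u F) ↔ x ⟨s(u, v), huv⟩ = true := by
            rw [percoGraph_adj]
            exact ⟨fun h => h.1.2, fun h => ⟨⟨huv, h⟩, hvF⟩⟩
          simp only [this]
        rw [h1, expC_ind_mul]
        · exact mul_le_mul_of_nonneg_left (ih _ hF' v hvF) hp.1
        · intro x b
          simp only [reachAvoid_setEdge (Finset.mem_insert_self u F) hvF huv b]
    have h2 := Finset.sum_le_sum hterm
    rw [Finset.sum_const, nsmul_eq_mul] at h2
    have h3 : (S.card : ℝ) ≤ d := by exact_mod_cast degree_le_of hd u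
    have h4 := mul_le_mul_of_nonneg_right h3 (by linarith [hp.1] : (0 : ℝ) ≤ p * 2)
    linarith

lemma compSize_eq_sum (x : G.edgeSet → Bool) (u : V) :
    (compSize G x u : ℝ) = ∑ w, if (percoGraph G x).Reachable u w then (1 : ℝ) else 0 := by
  rw [Finset.sum_boole]
  unfold compSize percoComp
  rw [← Set.ncard_coe_finset]
  congr 2
  ext w
  simp

lemma subcritical {d : ℕ} (hd : DegreeLE G d) {p : ℝ} (hp : p ∈ Set.Icc (0 : ℝ) 1)
    (hpd : p * (2 * d) ≤ 1) (u : V) :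
    expC p (fun x : G.edgeSet → Bool => (compSize G x u : ℝ)) ≤ 2 := by
  have := chi_bound hd hp hpd _ ∅ le_rfl u (by simp)
  refine le_trans (le_of_eq ?_) this
  congr 1
  funext x
  rw [compSize_eq_sum]
  refine Finset.sum_congr rfl fun w _ => ?_
  have : (percoGraph G x).Reachable u w ↔ reachAvoid ∅ x u w := by
    rw [SimpleGraph.reachable_iff_reflTransGen]
    unfold reachAvoid
    simp
  simp only [this]

end Subcritical

section WalkPart

open Classical

variable {V : Type*} {G : SimpleGraph V}

/-- Indicator that `u`, `v` are not connected. -/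
def sepI (G : SimpleGraph V) (u v : V) (x : G.edgeSet → Bool) : ℝ :=
  if (percoGraph G x).Reachable u v then 0 else 1

/-- Indicator that `u`, `v` are not connected, `a` is connected to `u` and `c` to `v`. -/
def conI (G : SimpleGraph V) (u v a c : V) (x : G.edgeSet → Bool) : ℝ :=
  if (percoGraph G x).Reachable u a ∧ (percoGraph G x).Reachable v c ∧
    ¬ (percoGraph G x).Reachable u v then 1 else 0

lemma conI_nonneg (u v a c : V) (x : G.edgeSet → Bool) : 0 ≤ conI G u v a c x := by
  unfold conI; split_ifs <;> simp

lemma conI_self (u v a : V) (x : G.edgeSet → Bool) : conI G u v a a x = 0 := by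
  unfold conI
  rw [if_neg]
  rintro ⟨h1, h2, h3⟩
  exact h3 (h1.trans h2.symm)

lemma sepI_open_le (u v : V) (x : G.edgeSet → Bool) (e : G.edgeSet) :
    sepI G u v (setEdge x e true) ≤ sepI G u v x := by
  unfold sepI
  split_ifs with h1 h2 h2
  · exact le_rfl
  · simp
  · exact absurd (h2.mono (percoGraph_le_open x e)) h1
  · exact le_rfl

lemma conI_step (u v c : V) {a a' : V} (h : G.Adj a a') (x : G.edgeSet → Bool) :
    conI G u v a c x ≤ (sepI G u v x - sepI G u v (setEdge x ⟨s(a, a'), h⟩ true)) +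
      conI G u v a' c (setEdge x ⟨s(a, a'), h⟩ true) := by
  have hmono := percoGraph_le_open x ⟨s(a, a'), h⟩
  have h1 := sepI_open_le u v x ⟨s(a, a'), h⟩
  have h2 := conI_nonneg u v a' c (setEdge x ⟨s(a, a'), h⟩ true)
  by_cases hQ : (percoGraph G x).Reachable u a ∧ (percoGraph G x).Reachable v c ∧
    ¬ (percoGraph G x).Reachable u v
  · have h3 : conI G u v a c x = 1 := if_pos hQ
    have h4 : sepI G u v x = 1 := if_neg hQ.2.2
    rw [h3, h4]
    by_cases hr : (percoGraph G (setEdge x ⟨s(a, a'), h⟩ true)).Reachable u v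
    · have h5 : sepI G u v (setEdge x ⟨s(a, a'), h⟩ true) = 0 := if_pos hr
      linarith
    · have h6 : conI G u v a' c (setEdge x ⟨s(a, a'), h⟩ true) = 1 := by
        refine if_pos ⟨?_, hQ.2.1.mono hmono, hr⟩
        refine (hQ.1.mono hmono).trans (SimpleGraph.Adj.reachable ?_)
        exact percoGraph_adj.2 ⟨h, setEdge_same _ _ _⟩
      have h7 : sepI G u v (setEdge x ⟨s(a, a'), h⟩ true) = 1 := if_neg hr
      linarith
  · have h3 : conI G u v a c x = 0 := if_neg hQ
    linarith

/-- The lazy adjacency matrix. -/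
def lazyM (G : SimpleGraph V) : Matrix V V ℝ :=
  Matrix.of fun a c => if a = c ∨ G.Adj a c then 1 else 0

lemma lazyM_apply (a c : V) : lazyM G a c = if a = c ∨ G.Adj a c then 1 else 0 := rfl

lemma lazyM_nonneg (a c : V) : 0 ≤ lazyM G a c := by
  rw [lazyM_apply]; split_ifs <;> simp

lemma lazyM_symm (a c : V) : lazyM G a c = lazyM G c a := by
  rw [lazyM_apply, lazyM_apply]
  simp only [G.adj_comm a c, eq_comm (a := a)]

variable [Fintype V]

lemma lazyM_pow_nonneg (k : ℕ) : ∀ a c : V, 0 ≤ (lazyM G ^ k) a c := by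
  induction k with
  | zero =>
    intro a c
    rw [pow_zero, Matrix.one_apply]
    split_ifs <;> simp
  | succ k ih =>
    intro a c
    rw [pow_succ, Matrix.mul_apply]
    exact Finset.sum_nonneg fun z _ => mul_nonneg (ih _ _) (lazyM_nonneg _ _)

lemma lazyM_row {d : ℕ} (hd : DegreeLE G d) (a : V) : ∑ c, lazyM G a c ≤ d + 1 := by
  calc ∑ c, lazyM G a c ≤ ∑ c, ((if a = c then (1 : ℝ) else 0) + if G.Adj a c then 1 else 0) := by
        refine Finset.sum_le_sum fun c _ => ?_
        rw [lazyM_apply]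
        by_cases h1 : a = c <;> by_cases h2 : G.Adj a c <;> simp [h1, h2]
    _ ≤ d + 1 := by
        rw [Finset.sum_add_distrib, Finset.sum_ite_eq, if_pos (Finset.mem_univ _),
          Finset.sum_boole]
        have : ((Finset.univ.filter (fun u => G.Adj a u)).card : ℝ) ≤ d := by
          exact_mod_cast degree_le_of hd a
        linarith

lemma lazyM_col {d : ℕ} (hd : DegreeLE G d) (c : V) : ∑ a, lazyM G a c ≤ d + 1 := by
  simp only [lazyM_symm _ c]
  exact lazyM_row hd c

lemma lazyM_pow_row {d : ℕ} (hd : DegreeLE G d) (k : ℕ) :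
    ∀ a : V, ∑ c, (lazyM G ^ k) a c ≤ ((d : ℝ) + 1) ^ k := by
  induction k with
  | zero => intro a; simp [Matrix.one_apply]
  | succ k ih =>
    intro a
    simp only [pow_succ', Matrix.mul_apply]
    rw [Finset.sum_comm]
    simp only [← Finset.mul_sum]
    calc _ ≤ ∑ z, lazyM G a z * ((d : ℝ) + 1) ^ k :=
          Finset.sum_le_sum fun z _ => mul_le_mul_of_nonneg_left (ih z) (lazyM_nonneg _ _)
      _ ≤ _ := by
          rw [← Finset.sum_mul]
          exact mul_le_mul_of_nonneg_right (lazyM_row hd a) (by positivity)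

/-- The influence of the (potential) edge `s(a,a')`. -/
def infl (G : SimpleGraph V) (p : ℝ) (u v : V) (a a' : V) : ℝ :=
  ∑ e : G.edgeSet, if s(a, a') = e.1 then
    expC p (fun x => sepI G u v x - sepI G u v (setEdge x e true)) else 0

lemma inf_nonneg {p : ℝ} (hp : p ∈ Set.Icc (0 : ℝ) 1) (u v : V) (e : G.edgeSet) :
    0 ≤ expC p (fun x => sepI G u v x - sepI G u v (setEdge x e true)) :=
  expC_nonneg hp fun x => sub_nonneg.2 (sepI_open_le u v x e)

lemma infl_nonneg {p : ℝ} (hp : p ∈ Set.Icc (0 : ℝ) 1) (u v a a' : V) :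
    0 ≤ infl G p u v a a' := by
  refine Finset.sum_nonneg fun e _ => ?_
  split_ifs
  · exact inf_nonneg hp u v e
  · exact le_rfl

lemma infl_eq (p : ℝ) (u v : V) {a a' : V} (h : G.Adj a a') :
    infl G p u v a a' = expC p (fun x => sepI G u v x -
      sepI G u v (setEdge x ⟨s(a, a'), h⟩ true)) := by
  unfold infl
  rw [Finset.sum_eq_single ⟨s(a, a'), h⟩]
  · simp
  · intro e _ he
    rw [if_neg]
    intro h2
    exact he (Subtype.ext h2.symm)
  · simp

lemma card_pairs (e : Sym2 V) :
    ∑ a : V, ∑ a' : V, (if s(a, a') = e then (1 : ℝ) else 0) ≤ 2 := by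
  rw [← Finset.sum_product', Finset.sum_boole]
  induction e using Sym2.ind with
  | _ u v =>
    have : (Finset.filter (fun x : V × V => s(x.1, x.2) = s(u, v)) (Finset.univ ×ˢ Finset.univ))
        ⊆ {(u, v), (v, u)} := by
      intro q hq
      have := (Finset.mem_filter.1 hq).2
      rw [Sym2.eq_iff] at this
      rcases this with ⟨h1, h2⟩ | ⟨h1, h2⟩
      · simp [Prod.ext_iff, h1, h2]
      · simp [Prod.ext_iff, h1, h2]
    have h2 := (Finset.card_le_card this).trans Finset.card_le_two
    exact_mod_cast h2

lemma sum_infl_le {p : ℝ} (hp : p ∈ Set.Icc (0 : ℝ) 1) (u v : V) :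
    ∑ a, ∑ a', infl G p u v a a' ≤ 2 * ∑ e : G.edgeSet,
      expC p (fun x => sepI G u v x - sepI G u v (setEdge x e true)) := by
  unfold infl
  rw [Finset.mul_sum]
  have h1 : ∀ a : V, ∑ a' : V, ∑ e : G.edgeSet, (if s(a, a') = e.1 then
      expC p (fun x => sepI G u v x - sepI G u v (setEdge x e true)) else 0) =
      ∑ e : G.edgeSet, ∑ a' : V, (if s(a, a') = e.1 then
      expC p (fun x => sepI G u v x - sepI G u v (setEdge x e true)) else 0) :=
    fun a => Finset.sum_comm
  simp only [h1]
  rw [Finset.sum_comm]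
  refine Finset.sum_le_sum fun e _ => ?_
  have h2 := mul_le_mul_of_nonneg_right (card_pairs e.1) (inf_nonneg hp u v e)
  refine le_trans (le_of_eq ?_) h2
  rw [Finset.sum_mul]
  refine Finset.sum_congr rfl fun a _ => ?_
  rw [Finset.sum_mul]
  refine Finset.sum_congr rfl fun a' _ => ?_
  split_ifs <;> simp

lemma card_edges_le {d : ℕ} (hd : DegreeLE G d) :
    (Fintype.card G.edgeSet : ℝ) ≤ d * Fintype.card V := by
  have h1 := G.sum_degrees_eq_twice_card_edges
  have h2 : ∑ v, G.degree v ≤ ∑ v : V, d := by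
    refine Finset.sum_le_sum fun v _ => ?_
    refine le_trans (le_of_eq ?_) (degree_le_of hd v)
    rw [← SimpleGraph.card_neighborFinset_eq_degree]
    congr 1
    ext w
    simp
  rw [Finset.sum_const, smul_eq_mul, Finset.card_univ, h1] at h2
  have h3 : Fintype.card G.edgeSet = G.edgeFinset.card := by
    rw [SimpleGraph.edgeFinset_card]
  have h4 : Fintype.card G.edgeSet ≤ d * Fintype.card V := by
    rw [h3, mul_comm d]; omega
  exact_mod_cast h4

lemma sum_infl_bound {d : ℕ} (hd : DegreeLE G d) {p : ℝ} (hp : p ∈ Set.Icc (0 : ℝ) 1)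
    (hV : 0 < Fintype.card V) (u v : V) :
    p * ∑ a, ∑ a', infl G p u v a a' ≤ 2 * ((d + 1) * Real.sqrt (Fintype.card V)) := by
  have hN : (0 : ℝ) < Fintype.card V := by exact_mod_cast hV
  have hs := Real.sqrt_pos.2 hN
  have h1 := mul_le_mul_of_nonneg_left (sum_infl_le (G := G) hp u v) hp.1
  have h2 := sum_influence hp (sepI G u v) (fun x => by unfold sepI; split_ifs <;> simp)
    (fun x => by unfold sepI; split_ifs <;> simp) _ hs
  have h3 : (Fintype.card G.edgeSet : ℝ) / Real.sqrt (Fintype.card V) ≤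
      d * Real.sqrt (Fintype.card V) := by
    rw [div_le_iff₀ hs, mul_assoc, Real.mul_self_sqrt hN.le]
    exact card_edges_le hd
  calc _ ≤ _ := h1
    _ = 2 * (p * ∑ e : G.edgeSet,
      expC p (fun x => sepI G u v x - sepI G u v (setEdge x e true))) := by ring
    _ ≤ 2 * (Real.sqrt (Fintype.card V) + d * Real.sqrt (Fintype.card V)) := by
        gcongr
        exact h2.trans (by gcongr)
    _ = _ := by ring

lemma con_step {p : ℝ} (hp : p ∈ Set.Icc (0 : ℝ) 1) (hp0 : 0 < p) (u v a a' c : V) :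
    lazyM G a a' * expC p (conI G u v a c) ≤
      infl G p u v a a' + p⁻¹ * (lazyM G a a' * expC p (conI G u v a' c)) := by
  have hI := infl_nonneg (G := G) hp u v a a'
  have hq : ∀ z, 0 ≤ expC p (conI G u v z c) := fun z => expC_nonneg hp (conI_nonneg u v z c)
  have hpi : 1 ≤ p⁻¹ := (one_le_inv₀ hp0).2 hp.2
  rw [lazyM_apply]
  by_cases haa : a = a'
  · subst haa
    simp only [true_or, if_true, one_mul]
    have := le_mul_of_one_le_left (hq a) hpi
    linarith
  · by_cases hadj : G.Adj a a'
    · simp only [hadj, or_true, if_true, one_mul]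
      rw [infl_eq p u v hadj]
      have h1 := expC_mono hp (conI_step u v c hadj)
      rw [expC_add] at h1
      have h2 := expC_open hp (conI_nonneg u v a' c) ⟨s(a, a'), hadj⟩
      have h3 : expC p (fun x => conI G u v a' c (setEdge x ⟨s(a, a'), hadj⟩ true)) ≤
          p⁻¹ * expC p (conI G u v a' c) := by
        rw [inv_mul_eq_div, le_div_iff₀ hp0, mul_comm]
        exact h2
      linarith
    · simp [haa, hadj, hI]

lemma walk_bound {d : ℕ} (hd : DegreeLE G d) {p : ℝ} (hp : p ∈ Set.Icc (0 : ℝ) 1) (hp0 : 0 < p)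
    (u v : V) (k : ℕ) :
    ∑ a, ∑ c, (lazyM G ^ k) a c * expC p (conI G u v a c) ≤
      k * (((d : ℝ) + 1) / p) ^ k * ∑ a, ∑ a', infl G p u v a a' := by
  set J := ∑ a, ∑ a', infl G p u v a a' with hJ
  have hJ0 : 0 ≤ J := Finset.sum_nonneg fun a _ => Finset.sum_nonneg fun a' _ =>
    infl_nonneg hp u v a a'
  have hpi : 1 ≤ p⁻¹ := (one_le_inv₀ hp0).2 hp.2
  induction k with
  | zero =>
    simp only [pow_zero, Matrix.one_apply]
    have : ∀ a c : V, (if a = c then (1 : ℝ) else 0) * expC p (conI G u v a c) = 0 := by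
      intro a c
      split_ifs with h
      · subst h
        have : conI G u v a a = fun _ => 0 := by
          funext x; exact conI_self u v a x
        rw [this, expC_const, mul_zero]
      · simp
    simp [this]
  | succ k ih =>
    set D : ℝ := ((d : ℝ) + 1) / p with hD
    have hd1 : (0 : ℝ) ≤ (d : ℝ) + 1 := by positivity
    have hD1 : (d : ℝ) + 1 ≤ D := by
      rw [hD, div_eq_mul_inv]
      exact le_mul_of_one_le_right hd1 hpi
    have hDone : 1 ≤ D := le_trans (by simp) hD1
    have hpt : ∀ a c : V, (lazyM G ^ (k + 1)) a c * expC p (conI G u v a c) ≤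
        ∑ z, ((lazyM G ^ k) z c * infl G p u v a z +
          p⁻¹ * (lazyM G a z * ((lazyM G ^ k) z c * expC p (conI G u v z c)))) := by
      intro a c
      rw [pow_succ', Matrix.mul_apply, Finset.sum_mul]
      refine Finset.sum_le_sum fun z _ => ?_
      have := mul_le_mul_of_nonneg_left (con_step (G := G) hp hp0 u v a z c)
        (lazyM_pow_nonneg (G := G) k z c)
      calc _ = _ := by ring
        _ ≤ _ := this
        _ = _ := by ring
    calc _ ≤ ∑ a, ∑ c, ∑ z, ((lazyM G ^ k) z c * infl G p u v a z +
          p⁻¹ * (lazyM G a z * ((lazyM G ^ k) z c * expC p (conI G u v z c)))) :=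
          Finset.sum_le_sum fun a _ => Finset.sum_le_sum fun c _ => hpt a c
      _ = (∑ a, ∑ z, (∑ c, (lazyM G ^ k) z c) * infl G p u v a z) +
          p⁻¹ * ∑ z, (∑ a, lazyM G a z) *
            ∑ c, (lazyM G ^ k) z c * expC p (conI G u v z c) := by
          simp only [Finset.sum_add_distrib]
          congr 1
          · refine Finset.sum_congr rfl fun a _ => ?_
            rw [Finset.sum_comm]
            simp only [Finset.sum_mul]
          · simp only [← Finset.mul_sum]
            congr 1
            calc _ = ∑ a, ∑ z, ∑ c, lazyM G a z *
                  ((lazyM G ^ k) z c * expC p (conI G u v z c)) :=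
                  Finset.sum_congr rfl fun a _ => Finset.sum_comm
              _ = ∑ z, ∑ a, ∑ c, lazyM G a z *
                  ((lazyM G ^ k) z c * expC p (conI G u v z c)) := Finset.sum_comm
              _ = _ := Finset.sum_congr rfl fun z _ => by rw [Finset.sum_mul_sum]
      _ ≤ (∑ a, ∑ z, ((d : ℝ) + 1) ^ k * infl G p u v a z) +
          p⁻¹ * ∑ z, ((d : ℝ) + 1) *
            ∑ c, (lazyM G ^ k) z c * expC p (conI G u v z c) := by
          refine add_le_add ?_ ?_
          · refine Finset.sum_le_sum fun a _ => Finset.sum_le_sum fun z _ => ?_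
            exact mul_le_mul_of_nonneg_right (lazyM_pow_row hd k z) (infl_nonneg hp u v a z)
          · refine mul_le_mul_of_nonneg_left ?_ (by positivity)
            refine Finset.sum_le_sum fun z _ => ?_
            refine mul_le_mul_of_nonneg_right (lazyM_col hd z) ?_
            exact Finset.sum_nonneg fun c _ => mul_nonneg (lazyM_pow_nonneg k z c)
              (expC_nonneg hp (conI_nonneg u v z c))
      _ = ((d : ℝ) + 1) ^ k * J + D * ∑ z, ∑ c, (lazyM G ^ k) z c * expC p (conI G u v z c) := by
          simp only [← Finset.mul_sum]
          rw [hJ, hD]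
          ring
      _ ≤ D ^ (k + 1) * J + D * (k * D ^ k * J) := by
          refine add_le_add ?_ (mul_le_mul_of_nonneg_left ih (by linarith))
          refine mul_le_mul_of_nonneg_right ?_ hJ0
          exact (pow_le_pow_left₀ hd1 hD1 k).trans (pow_le_pow_right₀ hDone (Nat.le_succ k))
      _ = _ := by push_cast; ring

end WalkPart

section Expansion

open Classical

variable {V : Type*} [Fintype V] {G : SimpleGraph V}

/-- The closed neighbourhood of a set. -/
def nbr (G : SimpleGraph V) (S : Finset V) : Finset V :=
  Finset.univ.filter fun w => ∃ a ∈ S, a = w ∨ G.Adj a w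

lemma subset_nbr (S : Finset V) : S ⊆ nbr G S := fun w hw =>
  Finset.mem_filter.2 ⟨Finset.mem_univ _, w, hw, Or.inl rfl⟩

lemma mem_nbr_iter (S : Finset V) (r : ℕ) : ∀ w ∈ (nbr G)^[r] S, ∃ a ∈ S,
    1 ≤ (lazyM G ^ r) a w := by
  induction r with
  | zero => intro w hw; exact ⟨w, hw, by simp⟩
  | succ r ih =>
    intro w hw
    rw [Function.iterate_succ_apply'] at hw
    obtain ⟨_, z, hz, hzw⟩ := Finset.mem_filter.1 hw
    obtain ⟨a, ha, h1⟩ := ih z hz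
    refine ⟨a, ha, ?_⟩
    rw [pow_succ, Matrix.mul_apply]
    have h2 := Finset.single_le_sum (f := fun z => (lazyM G ^ r) a z * lazyM G z w)
      (fun z _ => mul_nonneg (lazyM_pow_nonneg r a z) (lazyM_nonneg z w)) (Finset.mem_univ z)
    refine le_trans ?_ h2
    change 1 ≤ (lazyM G ^ r) a z * lazyM G z w
    rw [lazyM_apply, if_pos hzw, mul_one]
    exact h1

lemma lazyM_pow_symm (r : ℕ) (a c : V) : (lazyM G ^ r) a c = (lazyM G ^ r) c a := by
  have h : (lazyM G).IsSymm := by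
    ext i j
    exact lazyM_symm j i
  exact ((h.pow r).apply c a)

lemma walks_lower (A B : Finset V) (r : ℕ) :
    (((nbr G)^[r] A ∩ (nbr G)^[r] B).card : ℝ) ≤
      ∑ a ∈ A, ∑ c ∈ B, (lazyM G ^ (r + r)) a c := by
  have h1 : ∑ a ∈ A, ∑ c ∈ B, (lazyM G ^ (r + r)) a c =
      ∑ w, (∑ a ∈ A, (lazyM G ^ r) a w) * ∑ c ∈ B, (lazyM G ^ r) w c := by
    simp only [pow_add, Matrix.mul_apply, Finset.sum_mul_sum]
    calc _ = ∑ a ∈ A, ∑ w, ∑ c ∈ B, (lazyM G ^ r) a w * (lazyM G ^ r) w c :=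
          Finset.sum_congr rfl fun a _ => Finset.sum_comm
      _ = _ := Finset.sum_comm
  have hn := lazyM_pow_nonneg (G := G) r
  rw [h1]
  calc _ = ∑ w ∈ (nbr G)^[r] A ∩ (nbr G)^[r] B, (1 : ℝ) := by simp
    _ ≤ ∑ w ∈ (nbr G)^[r] A ∩ (nbr G)^[r] B,
        (∑ a ∈ A, (lazyM G ^ r) a w) * ∑ c ∈ B, (lazyM G ^ r) w c := by
        refine Finset.sum_le_sum fun w hw => ?_
        obtain ⟨a, ha, h2⟩ := mem_nbr_iter A r w (Finset.mem_inter.1 hw).1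
        obtain ⟨c, hc, h3⟩ := mem_nbr_iter B r w (Finset.mem_inter.1 hw).2
        rw [lazyM_pow_symm] at h3
        have h4 := Finset.single_le_sum (f := fun a => (lazyM G ^ r) a w) (fun a _ => hn a w) ha
        have h5 := Finset.single_le_sum (f := fun c => (lazyM G ^ r) w c) (fun c _ => hn w c) hc
        exact one_le_mul_of_one_le_of_one_le (h2.trans h4) (h3.trans h5)
    _ ≤ _ := by
        refine Finset.sum_le_sum_of_subset_of_nonneg (Finset.subset_univ _) fun w _ _ => ?_
        exact mul_nonneg (Finset.sum_nonneg fun a _ => hn a w)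
          (Finset.sum_nonneg fun c _ => hn w c)

lemma boundary_le_s8 {d : ℕ} (hd : DegreeLE G d) (S : Finset V) (T : Set (V × V))
    (hT : ∀ q ∈ T, G.Adj q.2 q.1 ∧ q.2 ∈ nbr G S \ S) :
    (T.ncard : ℝ) ≤ d * ((nbr G S).card - S.card) := by
  have h1 : T ⊆ ((nbr G S \ S).biUnion fun w =>
      (Finset.univ.filter fun z => G.Adj w z).image fun z => (z, w) : Finset (V × V)) := by
    intro q hq
    obtain ⟨h2, h3⟩ := hT q hq
    simp only [Finset.coe_biUnion, Set.mem_iUnion]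
    refine ⟨q.2, h3, ?_⟩
    rw [Finset.mem_coe, Finset.mem_image]
    exact ⟨q.1, Finset.mem_filter.2 ⟨Finset.mem_univ _, h2⟩, rfl⟩
  have h2 := Set.ncard_le_ncard h1 (Finset.finite_toSet _)
  rw [Set.ncard_coe_finset] at h2
  have h3 := h2.trans (Finset.card_biUnion_le_card_mul _ _ d fun w _ =>
    Finset.card_image_le.trans (degree_le_of hd w))
  have h4 : ((nbr G S \ S).card : ℝ) = (nbr G S).card - S.card := by
    rw [Finset.card_sdiff_of_subset (subset_nbr S), Nat.cast_sub (Finset.card_le_card (subset_nbr S))]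
  rw [← h4, mul_comm]
  exact_mod_cast h3

lemma growth {b : ℝ} {d : ℕ} (hd : DegreeLE G d) (hG : CheegerGT G b) {β : ℝ} (hβ0 : 0 ≤ β)
    (hβ : β * (d + 1) ≤ b) (S : Finset V) :
    (S.card : ℝ) + β * min (S.card : ℝ) (Fintype.card V - S.card) ≤ (nbr G S).card := by
  have hsub : (S.card : ℝ) ≤ (nbr G S).card := by exact_mod_cast Finset.card_le_card (subset_nbr S)
  have hSV : (S.card : ℝ) ≤ Fintype.card V := by exact_mod_cast Finset.card_le_univ S
  have key : ∀ s : ℝ, 0 ≤ s → b * s ≤ d * ((nbr G S).card - S.card) →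
      β * s ≤ (nbr G S).card - S.card := by
    intro s hs h
    have h1 : β * (d + 1) * s ≤ b * s := mul_le_mul_of_nonneg_right hβ hs
    have hd0 : (0 : ℝ) ≤ d := Nat.cast_nonneg d
    by_contra hcon
    push Not at hcon
    have := mul_le_mul_of_nonneg_left hcon.le hd0
    have h6 : 0 ≤ (((nbr G S).card : ℝ) - S.card) := by linarith
    nlinarith
  have hcast : Nat.card V = Fintype.card V := Nat.card_eq_fintype_card
  rcases le_total (2 * S.card) (Fintype.card V) with hle | hle
  · refine le_trans (add_le_add_right (mul_le_mul_of_nonneg_left (min_le_left _ _) hβ0) _) ?_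
    have : β * (S.card : ℝ) ≤ (nbr G S).card - S.card := by
      rcases Nat.eq_zero_or_pos S.card with h0 | h0
      · rw [h0] at hsub ⊢
        simp
      · refine key _ (Nat.cast_nonneg _) ?_
        have h1 := hG (S : Set V) (by rwa [Set.ncard_coe_finset])
          (by rw [Set.ncard_coe_finset, hcast]; exact hle)
        rw [Set.ncard_coe_finset] at h1
        refine h1.le.trans ?_
        unfold edgeBoundaryCard
        refine boundary_le_s8 hd S _ ?_
        rintro q ⟨h2, h3, h4⟩
        refine ⟨h2.symm, Finset.mem_sdiff.2 ⟨?_, h4⟩⟩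
        exact Finset.mem_filter.2 ⟨Finset.mem_univ _, q.1, h3, Or.inr h2⟩
    linarith
  · refine le_trans (add_le_add_right (mul_le_mul_of_nonneg_left (min_le_right _ _) hβ0) _) ?_
    have hc : ((Sᶜ).card : ℝ) = Fintype.card V - S.card := by
      rw [Finset.card_compl, Nat.cast_sub (Finset.card_le_univ S)]
    have : β * ((Sᶜ).card : ℝ) ≤ (nbr G S).card - S.card := by
      rcases Nat.eq_zero_or_pos (Sᶜ).card with h0 | h0
      · rw [h0]
        simp only [Nat.cast_zero, mul_zero]
        linarith
      · refine key _ (Nat.cast_nonneg _) ?_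
        have h1 := hG ((Sᶜ : Finset V) : Set V) (by rwa [Set.ncard_coe_finset])
          (by rw [Set.ncard_coe_finset, hcast, Finset.card_compl]; omega)
        rw [Set.ncard_coe_finset] at h1
        refine h1.le.trans ?_
        unfold edgeBoundaryCard
        rw [← Set.ncard_image_of_injective _ Prod.swap_injective]
        refine boundary_le_s8 hd S _ ?_
        rintro _ ⟨q, ⟨h2, h3, h4⟩, rfl⟩
        have h4' : q.2 ∈ S := by simpa using h4
        have h3' : q.1 ∉ S := by simpa using h3
        refine ⟨h2, Finset.mem_sdiff.2 ⟨?_, h3'⟩⟩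
        exact Finset.mem_filter.2 ⟨Finset.mem_univ _, q.2, h4', Or.inr h2.symm⟩
    rw [hc] at this
    linarith

lemma growth_iter {b : ℝ} {d : ℕ} (hd : DegreeLE G d) (hG : CheegerGT G b) {β : ℝ} (hβ0 : 0 ≤ β)
    (hβ : β * (d + 1) ≤ b) (S : Finset V) (r : ℕ) :
    min ((Fintype.card V : ℝ) / 2) ((1 + β) ^ r * S.card) ≤ ((nbr G)^[r] S).card := by
  induction r with
  | zero => simp
  | succ r ih =>
    rw [Function.iterate_succ_apply']
    set T := (nbr G)^[r] S
    have h1 := growth hd hG hβ0 hβ T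
    have hsub : (T.card : ℝ) ≤ (nbr G T).card := by
      exact_mod_cast Finset.card_le_card (subset_nbr T)
    rcases le_total ((Fintype.card V : ℝ) / 2) T.card with h | h
    · exact (min_le_left _ _).trans (h.trans hsub)
    · rw [min_eq_left (by linarith)] at h1
      rcases min_le_iff.1 ih with h2 | h2
      · exact (min_le_left _ _).trans (h2.trans hsub)
      · refine (min_le_right _ _).trans ?_
        have := mul_le_mul_of_nonneg_left h2 (by linarith : 0 ≤ 1 + β)
        rw [pow_succ]
        nlinarith

lemma inter_large {b : ℝ} {d : ℕ} (hd : DegreeLE G d) (hG : CheegerGT G b) {β : ℝ} (hβ0 : 0 ≤ β)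
    (hβ1 : β ≤ 1) (hβ : β * (d + 1) ≤ b) (A B : Finset V) (r : ℕ)
    (hA : (Fintype.card V : ℝ) ≤ (1 + β) ^ r * A.card)
    (hB : (Fintype.card V : ℝ) ≤ (1 + β) ^ r * B.card) :
    β / 4 * Fintype.card V ≤ (((nbr G)^[r + 1] A ∩ (nbr G)^[r + 1] B).card : ℝ) := by
  have hN : (0 : ℝ) ≤ Fintype.card V := Nat.cast_nonneg _
  have h1 := growth_iter hd hG hβ0 hβ A r
  have h2 := growth_iter hd hG hβ0 hβ B r
  rw [min_eq_left (by linarith)] at h1 h2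
  rw [Function.iterate_succ_apply', Function.iterate_succ_apply']
  set S := (nbr G)^[r] A
  set T := (nbr G)^[r] B
  have h3 := growth hd hG hβ0 hβ S
  have h4 : (T.card : ℝ) ≤ (nbr G T).card := by
    exact_mod_cast Finset.card_le_card (subset_nbr T)
  have h5 : ((nbr G S ∩ nbr G T).card : ℝ) + Fintype.card V ≥ (nbr G S).card + (nbr G T).card := by
    have h6 := Finset.card_inter_add_card_union (nbr G S) (nbr G T)
    have h7 := Finset.card_le_univ (nbr G S ∪ nbr G T)
    have : (nbr G S).card + (nbr G T).card ≤ (nbr G S ∩ nbr G T).card + Fintype.card V := by omega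
    exact_mod_cast this
  have hSV : (S.card : ℝ) ≤ Fintype.card V := by exact_mod_cast Finset.card_le_univ S
  rw [min_eq_right (by linarith)] at h3
  nlinarith

end Expansion

section Final

open Classical

variable {V : Type*} [Fintype V] {G : SimpleGraph V}

/-- Indicator that `u`, `v` lie in distinct clusters of size at least `k`. -/
def badI (G : SimpleGraph V) (u v : V) (k : ℝ) (x : G.edgeSet → Bool) : ℝ :=
  if ¬ (percoGraph G x).Reachable u v ∧ k ≤ compSize G x u ∧ k ≤ compSize G x v then 1 else 0

lemma badI_nonneg (u v : V) (k : ℝ) (x : G.edgeSet → Bool) : 0 ≤ badI G u v k x := by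
  unfold badI; split_ifs <;> simp

lemma comp_card (x : G.edgeSet → Bool) (u : V) :
    ((Finset.univ.filter fun w => (percoGraph G x).Reachable u w).card : ℝ) = compSize G x u := by
  rw [compSize_eq_sum, Finset.sum_boole]

lemma bad_le {b : ℝ} {d : ℕ} (hd : DegreeLE G d) (hG : CheegerGT G b) {β : ℝ} (hβ0 : 0 ≤ β)
    (hβ1 : β ≤ 1) (hβ : β * (d + 1) ≤ b) (u v : V) (r : ℕ) {k : ℝ}
    (hk : (Fintype.card V : ℝ) ≤ (1 + β) ^ r * k) (x : G.edgeSet → Bool) :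
    β / 4 * Fintype.card V * badI G u v k x ≤
      ∑ a, ∑ c, (lazyM G ^ (r + 1 + (r + 1))) a c * conI G u v a c x := by
  by_cases hb : ¬ (percoGraph G x).Reachable u v ∧ k ≤ compSize G x u ∧ k ≤ compSize G x v
  · have h1 : badI G u v k x = 1 := if_pos hb
    rw [h1, mul_one]
    have hpow : (0 : ℝ) ≤ (1 + β) ^ r := by positivity
    have h2 := inter_large hd hG hβ0 hβ1 hβ
      (Finset.univ.filter fun w => (percoGraph G x).Reachable u w)
      (Finset.univ.filter fun w => (percoGraph G x).Reachable v w) r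
      (by rw [comp_card]; exact hk.trans (mul_le_mul_of_nonneg_left hb.2.1 hpow))
      (by rw [comp_card]; exact hk.trans (mul_le_mul_of_nonneg_left hb.2.2 hpow))
    refine h2.trans ((walks_lower _ _ _).trans (le_of_eq ?_))
    rw [Finset.sum_filter]
    refine Finset.sum_congr rfl fun a _ => ?_
    split_ifs with ha
    · rw [Finset.sum_filter]
      refine Finset.sum_congr rfl fun c _ => ?_
      unfold conI
      by_cases hc : (percoGraph G x).Reachable v c <;> simp [ha, hc, hb.1]
    · symm
      refine Finset.sum_eq_zero fun c _ => ?_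
      unfold conI
      simp [ha]
  · have h1 : badI G u v k x = 0 := if_neg hb
    rw [h1, mul_zero]
    exact Finset.sum_nonneg fun a _ => Finset.sum_nonneg fun c _ =>
      mul_nonneg (lazyM_pow_nonneg _ a c) (conI_nonneg u v a c x)

lemma bad_prob {b : ℝ} {d : ℕ} (hd : DegreeLE G d) (hG : CheegerGT G b) {β : ℝ} (hβ0 : 0 ≤ β)
    (hβ1 : β ≤ 1) (hβ : β * (d + 1) ≤ b) (hV : 0 < Fintype.card V)
    {p : ℝ} (hp : p ∈ Set.Icc (0 : ℝ) 1) (hp0 : 0 < p)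
    (u v : V) (r : ℕ) {k : ℝ} (hk : (Fintype.card V : ℝ) ≤ (1 + β) ^ r * k) :
    β / 4 * Fintype.card V * (p * expC p (badI G u v k)) ≤
      (2 * (r + 1)) * (((d : ℝ) + 1) / p) ^ (r + 1 + (r + 1)) *
        (2 * ((d + 1) * Real.sqrt (Fintype.card V))) := by
  have h1 := expC_mono hp (bad_le hd hG hβ0 hβ1 hβ u v r hk)
  rw [expC_smul, expC_sum] at h1
  simp only [expC_sum, expC_smul] at h1
  have h2 := h1.trans (walk_bound hd hp hp0 u v (r + 1 + (r + 1)))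
  have h3 := mul_le_mul_of_nonneg_left h2 hp.1
  have h4 := sum_infl_bound hd hp hV u v
  calc _ = p * (β / 4 * Fintype.card V * expC p (badI G u v k)) := by ring
    _ ≤ _ := h3
    _ = (2 * (r + 1)) * (((d : ℝ) + 1) / p) ^ (r + 1 + (r + 1)) *
        (p * ∑ a, ∑ a', infl G p u v a a') := by push_cast; ring
    _ ≤ _ := mul_le_mul_of_nonneg_left h4 (by positivity)

lemma small_case {d : ℕ} (hd : DegreeLE G d) {p : ℝ} (hp : p ∈ Set.Icc (0 : ℝ) 1)
    (hpd : p * (2 * d) ≤ 1) {u v : V} (huv : G.Adj u v) :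
    norm1 p (deltaE p (fun x => (largestComp G x : ℝ)) ⟨s(u, v), huv⟩) ≤ 4 := by
  rw [norm1_deltaE_eq hp]
  have h1 : expC p (fun x : G.edgeSet → Bool =>
      |(largestComp G (setEdge x ⟨s(u, v), huv⟩ true) : ℝ) -
      largestComp G (setEdge x ⟨s(u, v), huv⟩ false)|) ≤ 2 := by
    refine le_trans (expC_mono hp fun x => ?_) (subcritical hd hp hpd u)
    refine (diff_bound x huv).trans ?_
    split_ifs
    · positivity
    · refine (min_le_left _ _).trans ?_
      exact_mod_cast compSize_mono (percoGraph_close_le x _) u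
  have h0 : 0 ≤ expC p (fun x : G.edgeSet → Bool =>
      |(largestComp G (setEdge x ⟨s(u, v), huv⟩ true) : ℝ) -
      largestComp G (setEdge x ⟨s(u, v), huv⟩ false)|) := expC_nonneg hp fun x => abs_nonneg _
  have h2 : (1 - p) * expC p (fun x : G.edgeSet → Bool =>
      |(largestComp G (setEdge x ⟨s(u, v), huv⟩ true) : ℝ) -
      largestComp G (setEdge x ⟨s(u, v), huv⟩ false)|) ≤ 2 :=
    (mul_le_of_le_one_left h0 (by linarith [hp.1])).trans h1
  have h3 := mul_nonneg (sub_nonneg.2 hp.2) h0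
  have h4 := (mul_le_of_le_one_left h3 hp.2).trans h2
  linarith

lemma large_case {b : ℝ} {d : ℕ} (hd : DegreeLE G d) (hG : CheegerGT G b) {β : ℝ} (hβ0 : 0 < β)
    (hβ1 : β ≤ 1) (hβ : β * (d + 1) ≤ b)
    {p : ℝ} (hp : p ∈ Set.Icc (0 : ℝ) 1) (hp0 : 1 ≤ p * (2 * (d + 1)))
    {u v : V} (huv : G.Adj u v) (r : ℕ) {k : ℝ} (hk0 : 0 ≤ k)
    (hk : (Fintype.card V : ℝ) ≤ (1 + β) ^ r * k) :
    norm1 p (deltaE p (fun x => (largestComp G x : ℝ)) ⟨s(u, v), huv⟩) ≤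
      2 * k + 32 / β * (d + 1) * ((r + 1) * (2 * ((d : ℝ) + 1) ^ 2) ^ (r + 1 + (r + 1))) *
        Real.sqrt (Fintype.card V) := by
  have hpp : 0 < p := by
    rcases hp.1.eq_or_lt with h | h
    · rw [← h] at hp0; norm_num at hp0
    · exact h
  have hV : 0 < Fintype.card V := Fintype.card_pos_iff.2 ⟨u⟩
  rw [norm1_deltaE_eq hp]
  have hb := bad_prob hd hG hβ0.le hβ1 hβ hV hp hpp u v r hk
  have h1 : (1 - p) * expC p (fun x : G.edgeSet → Bool =>
      |(largestComp G (setEdge x ⟨s(u, v), huv⟩ true) : ℝ) -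
      largestComp G (setEdge x ⟨s(u, v), huv⟩ false)|) ≤
      k + Fintype.card V * expC p (badI G u v k) := by
    have h2 : expC p (fun x : G.edgeSet → Bool =>
      |(largestComp G (setEdge x ⟨s(u, v), huv⟩ true) : ℝ) -
      largestComp G (setEdge x ⟨s(u, v), huv⟩ false)|) ≤
      k + Fintype.card V * expC p (fun x => badI G u v k (setEdge x ⟨s(u, v), huv⟩ false)) := by
      rw [← expC_smul, ← expC_const (E := G.edgeSet) p k, ← expC_add, expC_const]
      refine expC_mono hp fun x => (diff_bound x huv).trans ?_
      have h3 := badI_nonneg u v k (setEdge x ⟨s(u, v), huv⟩ false)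
      have hN : (0 : ℝ) ≤ Fintype.card V := Nat.cast_nonneg _
      split_ifs with hr
      · positivity
      · by_cases hk2 : k ≤ compSize G (setEdge x ⟨s(u, v), huv⟩ false) u ∧
          k ≤ compSize G (setEdge x ⟨s(u, v), huv⟩ false) v
        · have h4 : badI G u v k (setEdge x ⟨s(u, v), huv⟩ false) = 1 := if_pos ⟨hr, hk2⟩
          rw [h4, mul_one]
          refine (min_le_left _ _).trans ?_
          have h5 : (compSize G (setEdge x ⟨s(u, v), huv⟩ false) u : ℝ) ≤ Fintype.card V := by
            rw [← Nat.card_eq_fintype_card]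
            exact_mod_cast compSize_le_card _ u
          linarith
        · have h6 : min (compSize G (setEdge x ⟨s(u, v), huv⟩ false) u : ℝ)
              (compSize G (setEdge x ⟨s(u, v), huv⟩ false) v) ≤ k := by
            by_contra hcon
            push Not at hcon
            exact hk2 ⟨(hcon.trans_le (min_le_left _ _)).le, (hcon.trans_le (min_le_right _ _)).le⟩
          have := mul_nonneg hN h3
          linarith
    have h7 := mul_le_mul_of_nonneg_left h2 (sub_nonneg.2 hp.2)
    have h8 := expC_close hp (badI_nonneg (G := G) u v k) ⟨s(u, v), huv⟩
    have h9 := mul_le_mul_of_nonneg_left h8 (Nat.cast_nonneg (α := ℝ) (Fintype.card V))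
    have h10 : (1 - p) * k ≤ k := mul_le_of_le_one_left hk0 (by linarith [hp.1])
    calc _ ≤ _ := h7
      _ = (1 - p) * k + Fintype.card V * ((1 - p) *
        expC p (fun x => badI G u v k (setEdge x ⟨s(u, v), huv⟩ false))) := by ring
      _ ≤ _ := add_le_add h10 h9
  have hD : ((d : ℝ) + 1) / p ≤ 2 * ((d : ℝ) + 1) ^ 2 := by
    rw [div_le_iff₀ hpp]
    have : (0 : ℝ) ≤ (d : ℝ) + 1 := by positivity
    nlinarith [mul_le_mul_of_nonneg_left hp0 this]
  have hDp : (((d : ℝ) + 1) / p) ^ (r + 1 + (r + 1)) ≤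
      (2 * ((d : ℝ) + 1) ^ 2) ^ (r + 1 + (r + 1)) :=
    pow_le_pow_left₀ (by positivity) hD _
  have h11 := mul_le_mul_of_nonneg_left h1 hp.1
  have h12 : Fintype.card V * (p * expC p (badI G u v k)) ≤
      16 / β * (d + 1) * ((r + 1) * (2 * ((d : ℝ) + 1) ^ 2) ^ (r + 1 + (r + 1))) *
        Real.sqrt (Fintype.card V) := by
    have h13 : β / 4 * (Fintype.card V * (p * expC p (badI G u v k))) ≤
      (2 * (r + 1)) * (2 * ((d : ℝ) + 1) ^ 2) ^ (r + 1 + (r + 1)) *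
        (2 * ((d + 1) * Real.sqrt (Fintype.card V))) := by
      rw [← mul_assoc]
      refine hb.trans ?_
      gcongr
    have h14 := mul_le_mul_of_nonneg_left h13 (by positivity : 0 ≤ 4 / β)
    calc _ = 4 / β * (β / 4 * (Fintype.card V * (p * expC p (badI G u v k)))) := by
          field_simp
      _ ≤ _ := h14
      _ = _ := by ring
  have h15 : p * k ≤ k := mul_le_of_le_one_left hk0 hp.2
  calc _ ≤ 2 * (p * (k + Fintype.card V * expC p (badI G u v k))) := by linarith
    _ = 2 * (p * k + Fintype.card V * (p * expC p (badI G u v k))) := by ring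
    _ ≤ 2 * (k + 16 / β * (d + 1) * ((r + 1) * (2 * ((d : ℝ) + 1) ^ 2) ^ (r + 1 + (r + 1))) *
        Real.sqrt (Fintype.card V)) := by linarith
    _ = _ := by ring

end Final

lemma numerics {β Q N : ℝ} (hβ : 0 < β) (hQ : 1 < Q) (hN : 1 ≤ N) :
    ∃ r : ℕ, Q ^ r ≤ N ^ (1 / 4 : ℝ) ∧
      N / (1 + β) ^ r ≤ (1 + β) * N ^ (1 - Real.log (1 + β) / (4 * Real.log Q)) := by
  have hlQ : 0 < Real.log Q := Real.log_pos hQ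
  have hN0 : 0 < N := by linarith
  have hlN : 0 ≤ Real.log N := Real.log_nonneg hN
  have hb1 : 0 < 1 + β := by linarith
  have hlb : 0 < Real.log (1 + β) := Real.log_pos (by linarith)
  have hs : 0 ≤ Real.log N / (4 * Real.log Q) := by positivity
  refine ⟨⌊Real.log N / (4 * Real.log Q)⌋₊, ?_, ?_⟩
  · have h1 := Nat.floor_le hs
    set r := ⌊Real.log N / (4 * Real.log Q)⌋₊
    rw [le_div_iff₀ (by positivity)] at h1
    rw [← Real.rpow_natCast, Real.rpow_def_of_pos (by linarith), Real.rpow_def_of_pos hN0]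
    apply Real.exp_le_exp.2
    linarith
  · have h1 := (Nat.lt_floor_add_one (Real.log N / (4 * Real.log Q))).le
    set r := ⌊Real.log N / (4 * Real.log Q)⌋₊
    have h2 := mul_le_mul_of_nonneg_left h1 hlb.le
    rw [div_le_iff₀ (by positivity), ← Real.rpow_natCast]
    rw [Real.rpow_def_of_pos hb1, Real.rpow_def_of_pos hN0]
    nth_rewrite 1 [← Real.exp_log hN0]
    nth_rewrite 1 [← Real.exp_log hb1]
    rw [← Real.exp_add, ← Real.exp_add]
    apply Real.exp_le_exp.2
    have h3 : Real.log (1 + β) * (Real.log N / (4 * Real.log Q)) =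
      Real.log N * (Real.log (1 + β) / (4 * Real.log Q)) := by ring
    rw [h3] at h2
    linarith

lemma final_bound {V : Type*} [Fintype V] {G : SimpleGraph V} {b : ℝ} {d : ℕ}
    (hd : DegreeLE G d) (hG : CheegerGT G b) {β : ℝ} (hβ0 : 0 < β)
    (hβ1 : β ≤ 1) (hβ : β * (d + 1) ≤ b) {p : ℝ} (hp : p ∈ Set.Icc (0 : ℝ) 1)
    {u v : V} (huv : G.Adj u v) {Q δ : ℝ} (hQ : Q = 2 * (2 * ((d : ℝ) + 1) ^ 2) ^ 2)
    (hδ : δ = max (3 / 4) (1 - Real.log (1 + β) / (4 * Real.log Q))) :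
    norm1 p (deltaE p (fun x => (largestComp G x : ℝ)) ⟨s(u, v), huv⟩) ≤
      (4 + 2 * (1 + β) + 32 / β * (d + 1) * Q) * (Fintype.card V : ℝ) ^ δ := by
  have hV : 0 < Fintype.card V := Fintype.card_pos_iff.2 ⟨u⟩
  have hN : (1 : ℝ) ≤ Fintype.card V := by exact_mod_cast hV
  have hN0 : (0 : ℝ) < Fintype.card V := by linarith
  set N : ℝ := (Fintype.card V : ℝ) with hNdef
  have hd0 : (0 : ℝ) ≤ d := Nat.cast_nonneg d
  have hQ1 : 1 < Q := by
    have : (1 : ℝ) ≤ ((d : ℝ) + 1) ^ 2 := one_le_pow₀ (by linarith)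
    rw [hQ]; nlinarith
  have hQ0 : 0 < Q := by linarith
  have hδ0 : 3 / 4 ≤ δ := hδ ▸ le_max_left _ _
  have hNδ : 1 ≤ N ^ δ := Real.one_le_rpow hN (by linarith)
  have hc1 : 0 ≤ 32 / β * (d + 1) * Q := by positivity
  rcases le_total (p * (2 * (d + 1))) 1 with hps | hpl
  · have h1 := small_case hd hp (by nlinarith [hp.1]) huv
    refine h1.trans ?_
    nlinarith
  · obtain ⟨r, hr1, hr2⟩ := numerics hβ0 hQ1 hN
    have hpow : 0 < (1 + β) ^ r := by positivity
    have h1 := large_case hd hG hβ0 hβ1 hβ hp hpl huv r (k := N / (1 + β) ^ r) (by positivity)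
      (le_of_eq (by field_simp; rfl))
    refine h1.trans ?_
    have h2 : N ^ (1 - Real.log (1 + β) / (4 * Real.log Q)) ≤ N ^ δ :=
      Real.rpow_le_rpow_of_exponent_le hN (hδ ▸ le_max_right _ _)
    have h3 : ((r : ℝ) + 1) * (2 * ((d : ℝ) + 1) ^ 2) ^ (r + 1 + (r + 1)) ≤ Q * Q ^ r := by
      have h4 : ((r : ℝ) + 1) ≤ 2 ^ (r + 1) := by
        exact_mod_cast (Nat.lt_two_pow_self (n := r + 1)).le
      calc _ ≤ (2 : ℝ) ^ (r + 1) * (2 * ((d : ℝ) + 1) ^ 2) ^ (r + 1 + (r + 1)) := by gcongr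
        _ = Q * Q ^ r := by
          rw [← pow_succ', hQ, mul_pow 2 ((2 * ((d : ℝ) + 1) ^ 2) ^ 2), ← pow_mul]
          congr 2
          ring
    have h5 : N ^ (1 / 4 : ℝ) * Real.sqrt N ≤ N ^ δ := by
      rw [Real.sqrt_eq_rpow, ← Real.rpow_add hN0]
      refine Real.rpow_le_rpow_of_exponent_le hN ?_
      linarith
    have h6 : 32 / β * (d + 1) * ((r + 1) * (2 * ((d : ℝ) + 1) ^ 2) ^ (r + 1 + (r + 1))) *
        Real.sqrt N ≤ 32 / β * (d + 1) * Q * N ^ δ := by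
      calc _ ≤ 32 / β * (d + 1) * (Q * N ^ (1 / 4 : ℝ)) * Real.sqrt N := by
            refine mul_le_mul_of_nonneg_right ?_ (Real.sqrt_nonneg _)
            refine mul_le_mul_of_nonneg_left ?_ (by positivity)
            exact h3.trans (mul_le_mul_of_nonneg_left hr1 hQ0.le)
        _ = 32 / β * (d + 1) * Q * (N ^ (1 / 4 : ℝ) * Real.sqrt N) := by ring
        _ ≤ _ := by gcongr
    have h7 : N / (1 + β) ^ r ≤ (1 + β) * N ^ δ := hr2.trans (by gcongr)
    calc _ ≤ 2 * ((1 + β) * N ^ δ) + 32 / β * (d + 1) * Q * N ^ δ := by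
          refine add_le_add ?_ h6
          linarith
      _ ≤ _ := by nlinarith

/-- there are `δ(b,d) < 1` and `K(b,d) < ∞` such that in any `(b,d)`-expander,
`sup_p sup_{e ∈ E_n} ‖Δ_{e,p} L_n⁽¹⁾‖_{1,p} ≤ K |V_n|^δ` for every `n`. -/
theorem stmt8 (b : ℝ) (hb : 0 < b) (d : ℕ) :
    ∃ δ < (1 : ℝ), ∃ K : ℝ,
      ∀ (E : ExpanderSeq b d) (n : ℕ), ∀ p ∈ Set.Icc (0 : ℝ) 1, ∀ e : (E.G n).edgeSet,
        norm1 p (deltaE p (fun x => (largestComp (E.G n) x : ℝ)) e) ≤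
          K * (Nat.card (E.V n) : ℝ) ^ δ := by
  have hd0 : (0 : ℝ) ≤ d := Nat.cast_nonneg d
  have hd1 : (0 : ℝ) < (d : ℝ) + 1 := by linarith
  set β : ℝ := min 1 (b / (d + 1)) with hβdef
  have hβ0 : 0 < β := lt_min one_pos (by positivity)
  have hβ1 : β ≤ 1 := min_le_left _ _
  have hβ : β * (d + 1) ≤ b := by
    rw [← le_div_iff₀ hd1]
    exact min_le_right _ _
  set Q : ℝ := 2 * (2 * ((d : ℝ) + 1) ^ 2) ^ 2 with hQ
  have hQ1 : 1 < Q := by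
    have : (1 : ℝ) ≤ ((d : ℝ) + 1) ^ 2 := one_le_pow₀ (by linarith)
    rw [hQ]; nlinarith
  have hη : 0 < Real.log (1 + β) / (4 * Real.log Q) :=
    div_pos (Real.log_pos (by linarith)) (mul_pos (by norm_num) (Real.log_pos hQ1))
  refine ⟨max (3 / 4) (1 - Real.log (1 + β) / (4 * Real.log Q)),
    max_lt (by norm_num) (by linarith), 4 + 2 * (1 + β) + 32 / β * (d + 1) * Q, ?_⟩
  intro E n p hp e
  haveI := E.finV n
  letI : Fintype (E.V n) := Fintype.ofFinite _
  rw [Nat.card_eq_fintype_card]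
  obtain ⟨e, he⟩ := e
  induction e using Sym2.ind with
  | _ u v =>
    exact final_bound (E.degree_le n) (E.cheeger_gt n) hβ0 hβ1 hβ hp he hQ rfl
end
end
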